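/- arXiv:2507.16435 — 2 statements merged into one kernel-verified Lean document; each statement's English description precedes it below -/
import Mathlib

section
/- Let C be an algebraically closed field of characteristic zero, regarded as a differential field with zero derivation, and let M be a differential field extension of C (so the derivation of M vanishes on C). Let F = M(x₁,…,xₙ) be a rational function field over M in variables x₁,…,xₙ (algebraically independent over M), equipped with the unique derivation extending that of M and satisfying xᵢ′ = fᵢ for i = 1,…,n, where f₁,…,fₙ lie in the subfield C(x₁,…,xₙ) of F. If F contains a constant that does not lie in M, then there exists z ∈ C(x₁,…,xₙ) with z ∉ C such that either z′ = 0, or z′ = 1, or z′ = c·z for some nonzero c ∈ C (equivalently, Σᵢ fᵢ·∂z/∂xᵢ equals 0, 1, or c·z). -/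
universe u

/-- A bundled differential field of characteristic zero: a field together with a derivation,
given as a raw function satisfying additivity and the Leibniz rule. -/
structure DFld : Type (u + 1) where
  carrier : Type u
  [fieldInst : Field carrier]
  [charZeroInst : CharZero carrier]
  deriv : carrier → carrier
  deriv_add : ∀ a b, deriv (a + b) = deriv a + deriv b
  deriv_mul : ∀ a b, deriv (a * b) = deriv a * b + a * deriv b

attribute [instance] DFld.fieldInst DFld.charZeroInst

/-- The result of applying the monic linear differential operator
`∂^n + a_{n-1} ∂^{n-1} + ⋯ + a_1 ∂ + a_0` (with coefficients `a`) to `y`,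
where the derivation is given by `D`. -/
def LApply {E : Type u} [Field E] (D : E → E) (n : ℕ) (a : Fin n → E) (y : E) : E :=
  D^[n] y + ∑ i : Fin n, a i * D^[(i : ℕ)] y

/-- `diffGen D k S` is the smallest differential subfield (w.r.t. the derivation `D`)
containing the subfield `k` and the set `S`; i.e. the differential field `k⟨S⟩`. -/
def diffGen {E : Type u} [Field E] (D : E → E) (k : Subfield E) (S : Set E) : Subfield E :=
  sInf {F : Subfield E | k ≤ F ∧ S ⊆ ↑F ∧ ∀ x ∈ F, D x ∈ F}

/-- The subfield of constants of a differential subfield `k`: `{x ∈ k | D x = 0}`. -/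
def constantsOf {E : Type u} [Field E] (D : Derivation ℤ E E) (k : Subfield E) : Subfield E where
  carrier := {x | x ∈ k ∧ D x = 0}
  zero_mem' := ⟨k.zero_mem, map_zero D⟩
  one_mem' := ⟨k.one_mem, D.map_one_eq_zero⟩
  add_mem' := by
    rintro a b ⟨hak, ha0⟩ ⟨hbk, hb0⟩
    exact ⟨k.add_mem hak hbk, by rw [map_add, ha0, hb0, add_zero]⟩
  neg_mem' := by
    rintro a ⟨hak, ha0⟩
    exact ⟨k.neg_mem hak, by rw [map_neg, ha0, neg_zero]⟩
  mul_mem' := by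
    rintro a b ⟨hak, ha0⟩ ⟨hbk, hb0⟩
    exact ⟨k.mul_mem hak hbk, by
      rw [Derivation.leibniz, ha0, hb0, smul_zero, smul_zero, add_zero]⟩
  inv_mem' := by
    rintro x ⟨hxk, hx0⟩
    refine ⟨k.inv_mem hxk, ?_⟩
    by_cases h : x = 0
    · simp [h]
    · have h1 : D (x * x⁻¹) = 0 := by rw [mul_inv_cancel₀ h, D.map_one_eq_zero]
      rw [Derivation.leibniz, hx0, smul_zero, add_zero, smul_eq_mul] at h1
      exact (mul_eq_zero.mp h1).resolve_left h

/-- `F` is a Picard–Vessiot extension of `k` (inside a common differential field) for the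
monic linear differential operator of order `n` with (lower-order) coefficients `a`:
both are differential subfields, the constants of `F` equal the constants of `k`,
the coefficients lie in `k`, and `F` is differentially generated over `k` by an
`n`-dimensional vector space (over the constants) of solutions. -/
def IsPVWith {E : Type u} [Field E] (D : E → E) (k F : Subfield E) (n : ℕ)
    (a : Fin n → E) : Prop :=
  k ≤ F ∧ (∀ x ∈ k, D x ∈ k) ∧ (∀ x ∈ F, D x ∈ F) ∧
  (∀ x ∈ F, D x = 0 → x ∈ k) ∧
  (∀ i, a i ∈ k) ∧
  ∃ y : Fin n → E,
    (∀ i, y i ∈ F) ∧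
    (∀ i, LApply D n a (y i) = 0) ∧
    (∀ c : Fin n → E, (∀ i, c i ∈ k ∧ D (c i) = 0) → (∑ i, c i * y i) = 0 → ∀ i, c i = 0) ∧
    diffGen D k (Set.range y) = F

/-- `F` is a Picard–Vessiot extension of `k` for some monic linear differential operator. -/
def IsPV {E : Type u} [Field E] (D : E → E) (k F : Subfield E) : Prop :=
  ∃ (n : ℕ) (a : Fin n → E), IsPVWith D k F n a

/-- Relative version: the differential subfield `F` is a Picard–Vessiot extension
of the differential subfield `kb ≤ F`. -/
def IsPVRel {E : Type u} [Field E] (D : E → E) (kb F : Subfield E)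
    (hF : ∀ x ∈ F, D x ∈ F) : Prop :=
  IsPV (fun x : ↥F => (⟨D ↑x, hF ↑x x.2⟩ : ↥F)) (Subfield.comap F.subtype kb) ⊤

/-- The ambient differential field (with derivation `D`) is a strongly normal extension of
its differential subfield `k`: it is finitely generated as a field extension of `k`, has no
new constants, and every differential embedding over `k` into a differential field extension
`M` lands in the compositum of the image of the base copy with the constants of `M`. -/
def IsSN {E : Type u} [Field E] (D : E → E) (k : Subfield E) : Prop :=
  (∀ x ∈ k, D x ∈ k) ∧
  (∃ s : Finset E, Subfield.closure (↑k ∪ ↑s) = (⊤ : Subfield E)) ∧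
  (∀ x : E, D x = 0 → x ∈ k) ∧
  ∀ (M : DFld.{u}) (ι σ : E →+* M.carrier),
    (∀ x, ι (D x) = M.deriv (ι x)) →
    (∀ x, σ (D x) = M.deriv (σ x)) →
    (∀ x ∈ k, σ x = ι x) →
    ∀ e : E, σ e ∈ Subfield.closure (Set.range ι ∪ {m : M.carrier | M.deriv m = 0})

/-- Relative version: the differential subfield `F` is a strongly normal extension of the
differential subfield `kb ≤ F`. -/
def IsSNRel {E : Type u} [Field E] (D : E → E) (kb F : Subfield E)
    (hF : ∀ x ∈ F, D x ∈ F) : Prop :=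
  IsSN (fun x : ↥F => (⟨D ↑x, hF ↑x x.2⟩ : ↥F)) (Subfield.comap F.subtype kb)

/-- `K` is a finite field extension of the subfield `M`. -/
def FinExt {E : Type u} [Field E] (M K : Subfield E) : Prop :=
  ∃ h : M ≤ K,
    letI : Algebra ↥M ↥K := (Subfield.inclusion h).toAlgebra
    Module.Finite ↥M ↥K

/-- The transcendence degree of the subfield `K` over the subfield `k`, as the supremum of the
cardinalities of subsets of `K` that are algebraically independent over `k`. -/
noncomputable def trdegOf {E : Type u} [Field E] (k K : Subfield E) : Cardinal.{u} :=
  ⨆ s : {s : Set E // s ⊆ (K : Set E) ∧ AlgebraicIndependent ↥k (fun x : ↥s => (x : E))},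
    Cardinal.mk ↥(s.1)

/-- `K` and `M` are free over `k`: every finite subset of `K` that is algebraically
independent over `k` remains algebraically independent over `M`. -/
def FreeOver {E : Type u} [Field E] (k K M : Subfield E) : Prop :=
  ∀ s : Finset E, (↑s : Set E) ⊆ (K : Set E) →
    AlgebraicIndependent ↥k (fun x : ↥(↑s : Set E) => (x : E)) →
    AlgebraicIndependent ↥M (fun x : ↥(↑s : Set E) => (x : E))

/-- `K` is a `k`-irreducible differential field: it is a finitely generated differential field
extension of `k` of transcendence degree at least 1, and every intermediate differential field
`k ⊂ M ⊆ K` has transcendence degree `0` or `trdeg(K|k)` over `k`. -/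
def IsIrred {E : Type u} [Field E] (D : E → E) (k K : Subfield E) : Prop :=
  (∃ s : Finset E, diffGen D k ↑s = K) ∧
  1 ≤ trdegOf k K ∧
  ∀ M : Subfield E, (∀ x ∈ M, D x ∈ M) → k < M → M ≤ K →
    trdegOf k M = 0 ∨ trdegOf k M = trdegOf k K

/-- `Kf` is a `d`-solvable extension of `k`: there is a tower of differential fields starting
at (a copy of) `k`, each step being a finite algebraic extension or a Picard–Vessiot extension
for an operator of order at most `d`, whose top contains (the copy of) `Kf`. -/
def IsDSolvable {E : Type u} [Field E] (D : E → E) (k Kf : Subfield E) (d : ℕ) : Prop :=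
  ∃ (Ω : DFld.{u}) (j : E →+* Ω.carrier),
    (∀ x, j (D x) = Ω.deriv (j x)) ∧
    ∃ (r : ℕ) (T : Fin (r + 1) → Subfield Ω.carrier),
      T 0 = Subfield.map j k ∧
      Subfield.map j Kf ≤ T (Fin.last r) ∧
      (∀ i, ∀ x ∈ T i, Ω.deriv x ∈ T i) ∧
      ∀ i : Fin r,
        FinExt (T i.castSucc) (T i.succ) ∨
        ∃ n ≤ d, ∃ a : Fin n → Ω.carrier, IsPVWith Ω.deriv (T i.castSucc) (T i.succ) n a

/-- `Kn` is generated over `kb`, as a differential field with the same constants, by one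
solution `z` of an inhomogeneous equation `L(y) = b` (with `L` monic over `kb` of order
`n ≤ d` and `b ∈ kb`) together with an `n`-dimensional space (over the constants) of
solutions of `L(y) = 0`. -/
def IsPVInhomLe {E : Type u} [Field E] (D : E → E) (kb Kn : Subfield E) (d : ℕ) : Prop :=
  kb ≤ Kn ∧ (∀ x ∈ kb, D x ∈ kb) ∧ (∀ x ∈ Kn, D x ∈ Kn) ∧
  (∀ x ∈ Kn, D x = 0 → x ∈ kb) ∧
  ∃ n, n ≤ d ∧ ∃ (a : Fin n → E) (b z : E) (y : Fin n → E),
    (∀ i, a i ∈ kb) ∧ b ∈ kb ∧ z ∈ Kn ∧ (∀ i, y i ∈ Kn) ∧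
    LApply D n a z = b ∧
    (∀ i, LApply D n a (y i) = 0) ∧
    (∀ c : Fin n → E, (∀ i, c i ∈ kb ∧ D (c i) = 0) → (∑ i, c i * y i) = 0 → ∀ i, c i = 0) ∧
    diffGen D kb (insert z (Set.range y)) = Kn

/-- `Kf` is a `d⁺`-solvable extension of `k`. -/
def IsDPlusSolvable {E : Type u} [Field E] (D : E → E) (k Kf : Subfield E) (d : ℕ) : Prop :=
  ∃ (Ω : DFld.{u}) (j : E →+* Ω.carrier),
    (∀ x, j (D x) = Ω.deriv (j x)) ∧
    ∃ (r : ℕ) (T : Fin (r + 1) → Subfield Ω.carrier),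
      T 0 = Subfield.map j k ∧
      Subfield.map j Kf ≤ T (Fin.last r) ∧
      (∀ i, ∀ x ∈ T i, Ω.deriv x ∈ T i) ∧
      ∀ i : Fin r,
        FinExt (T i.castSucc) (T i.succ) ∨ IsPVInhomLe Ω.deriv (T i.castSucc) (T i.succ) d

/-- `TSet D kb K` is the set of elements of `K` annihilated by some monic linear differential
operator with coefficients in `kb`. -/
def TSet {E : Type u} [Field E] (D : E → E) (kb K : Subfield E) : Set E :=
  {x | x ∈ K ∧ ∃ (n : ℕ) (a : Fin n → E), (∀ i, a i ∈ kb) ∧ LApply D n a x = 0}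


theorem aux_null {C A : Type*} [Field C] [IsAlgClosed C] [CommRing A] [IsDomain A] [Algebra C A]
    [Algebra.FiniteType C A] (s : A) (hs : s ≠ 0) : ∃ φ : A →ₐ[C] C, φ s ≠ 0 := by
  let B := Localization.Away s
  have : Algebra.FiniteType A B := IsLocalization.finiteType_of_monoid_fg (Submonoid.powers s) B
  have hft : Algebra.FiniteType C B := Algebra.FiniteType.trans (S := A) inferInstance inferInstance
  have hnt : Nontrivial B := by
    have : IsDomain B := IsLocalization.isDomain_localization (powers_le_nonZeroDivisors_of_noZeroDivisors hs)
    infer_instance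
  obtain ⟨m, hm⟩ := Ideal.exists_maximal B
  let := Ideal.Quotient.field m
  have : Algebra.FiniteType C (B ⧸ m) := 
    Algebra.FiniteType.of_surjective (Ideal.Quotient.mkₐ C m) (Ideal.Quotient.mkₐ_surjective C m)
  have hfin : Module.Finite C (B ⧸ m) := finite_of_finite_type_of_isJacobsonRing C (B ⧸ m)
  have halg : Algebra.IsAlgebraic C (B ⧸ m) := Algebra.IsAlgebraic.of_finite C _
  let ψ : (B ⧸ m) →ₐ[C] C := IsAlgClosed.lift
  refine ⟨(ψ.comp (Ideal.Quotient.mkₐ C m)).comp (IsScalarTower.toAlgHom C A B), ?_⟩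
  have hu : IsUnit (algebraMap A B s) := IsLocalization.Away.algebraMap_isUnit s
  have := hu.map ((ψ.comp (Ideal.Quotient.mkₐ C m)))
  exact this.ne_zero

open MvPolynomial in
theorem aux_spec_poly {C M ι : Type*} [Field C] [IsAlgClosed C] [Field M] [Algebra C M] [Fintype ι]
    {n : ℕ} (p : ι → MvPolynomial (Fin n) M) (a g : MvPolynomial (Fin n) M) (c : ι → ι → M)
    (h : MvPolynomial (Fin n) C) (H : Fin n → MvPolynomial (Fin n) C) (hg : g ≠ 0)
    (hid : ∀ i, g * ∑ j, map (algebraMap C M) (H j) * pderiv j (p i) =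
      map (algebraMap C M) h * a * p i + g * map (algebraMap C M) h * ∑ j, MvPolynomial.C (c i j) * p j)
    (i0 i1 : ι) (h0 : p i0 ≠ 0) (h1 : ∀ m : M, p i1 ≠ MvPolynomial.C m * p i0) :
    ∃ (p' : ι → MvPolynomial (Fin n) C) (a' g' : MvPolynomial (Fin n) C) (c' : ι → ι → C),
      g' ≠ 0 ∧ (∀ i, g' * ∑ j, (H j) * pderiv j (p' i) =
      h * a' * p' i + g' * h * ∑ j, MvPolynomial.C (c' i j) * p' j) ∧ p' i0 ≠ 0 ∧
      ∀ m : C, p' i1 ≠ MvPolynomial.C m * p' i0 := by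
  classical
  let S : Set M := (⋃ i, ((p i).coeffs : Set M)) ∪ (a.coeffs ∪ g.coeffs) ∪ Set.range (fun t : ι × ι => c t.1 t.2)
  have hSf : S.Finite := by
    refine Set.Finite.union (Set.Finite.union (Set.finite_iUnion fun i => Finset.finite_toSet _) ((Finset.finite_toSet _).union (Finset.finite_toSet _))) (Set.finite_range _)
  let A : Subalgebra C M := Algebra.adjoin C S
  have hA : S ⊆ A := Algebra.subset_adjoin
  have hft : Algebra.FiniteType C A := by
    rw [← Subalgebra.fg_iff_finiteType]
    exact Subalgebra.fg_def.2 ⟨S, hSf, rfl⟩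
  have lift : ∀ q : MvPolynomial (Fin n) M, (q.coeffs : Set M) ⊆ S → ∃ q' : MvPolynomial (Fin n) A, map (A.val : A →+* M) q' = q := by
    intro q hq
    have := (MvPolynomial.mem_range_map_iff_coeffs_subset (f := (A.val : A →+* M)) (x := q)).2 ?_
    · exact this
    · intro y hy
      exact ⟨⟨y, hA (hq hy)⟩, rfl⟩
  have hinj : Function.Injective (map (σ := Fin n) (A.val : A →+* M)) := 
    MvPolynomial.map_injective _ Subtype.val_injective
  choose p1 hp1 using fun i => lift (p i) (fun y hy => Or.inl (Or.inl (Set.mem_iUnion.2 ⟨i, hy⟩)))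
  obtain ⟨a1, ha1⟩ := lift a (fun y hy => Or.inl (Or.inr (Or.inl hy)))
  obtain ⟨g1, hg1⟩ := lift g (fun y hy => Or.inl (Or.inr (Or.inr hy)))
  let c1 : ι → ι → A := fun i j => ⟨c i j, hA (Or.inr ⟨(i,j), rfl⟩)⟩
  have hcomp : ∀ q : MvPolynomial (Fin n) C, map (A.val : A →+* M) (map (algebraMap C A) q) = map (algebraMap C M) q := by
    intro q
    rw [MvPolynomial.map_map]; rfl
  have hid1 : ∀ i, g1 * ∑ j, map (algebraMap C A) (H j) * pderiv j (p1 i) =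
      map (algebraMap C A) h * a1 * p1 i + g1 * map (algebraMap C A) h * ∑ j, MvPolynomial.C (c1 i j) * p1 j := by
    intro i
    apply hinj
    simp only [map_mul, map_add, map_sum, hcomp, ← pderiv_map, hp1, ha1, hg1, MvPolynomial.map_C]
    exact hid i
  obtain ⟨G, hG⟩ : ∃ G, coeff G g1 ≠ 0 := by
    by_contra! hh
    apply hg
    rw [← hg1, show g1 = 0 from MvPolynomial.ext _ _ (by simpa using hh), map_zero]
  obtain ⟨I, hI⟩ : ∃ I, coeff I (p i0) ≠ 0 := by
    by_contra! hh
    exact h0 (MvPolynomial.ext _ _ (by simpa using hh))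
  obtain ⟨J, hJ⟩ : ∃ J, coeff I (p i0) * coeff J (p i1) - coeff I (p i1) * coeff J (p i0) ≠ 0 := by
    by_contra! hh
    apply h1 (coeff I (p i1) / coeff I (p i0))
    ext J
    rw [coeff_C_mul]
    have := hh J
    field_simp
    linear_combination this
  have hcoe : ∀ i K, coeff K (p i) = (coeff K (p1 i) : A) := by
    intro i K
    rw [← hp1 i, coeff_map]; rfl
  set s2 : A := coeff I (p1 i0) * coeff J (p1 i1) - coeff I (p1 i1) * coeff J (p1 i0) with hs2
  have hs2' : s2 ≠ 0 := by
    intro hh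
    apply hJ
    simp only [hcoe]
    have := congrArg (Subtype.val) hh
    simpa [hs2] using this
  obtain ⟨φ, hφ⟩ := aux_null (C := C) (coeff G g1 * s2) (mul_ne_zero hG hs2')
  rw [map_mul] at hφ
  have hφ1 := left_ne_zero_of_mul hφ
  have hφ2 := right_ne_zero_of_mul hφ
  have hcomp2 : ∀ q : MvPolynomial (Fin n) C, map (φ : A →+* C) (map (algebraMap C A) q) = q := by
    intro q
    rw [MvPolynomial.map_map]
    have : ((φ : A →+* C)).comp (algebraMap C A) = RingHom.id C := by
      ext y; simp
    rw [this, MvPolynomial.map_id]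
  refine ⟨fun i => map (φ : A →+* C) (p1 i), map (φ : A →+* C) a1, map (φ : A →+* C) g1, fun i j => φ (c1 i j), ?_, ?_, ?_, ?_⟩
  · intro hh
    apply hφ1
    have := congrArg (coeff G) hh
    simpa [coeff_map] using this
  · intro i
    have := congrArg (map (φ : A →+* C)) (hid1 i)
    simp only [map_mul, map_add, map_sum, hcomp2, ← pderiv_map, MvPolynomial.map_C] at this
    exact this
  · intro hh
    apply hφ2
    have h2 := congrArg (coeff I) hh
    have h3 := congrArg (coeff J) hh
    simp only [coeff_map, coeff_zero, RingHom.coe_coe] at h2 h3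
    simp [hs2, h2, h3]
  · intro m hh
    apply hφ2
    have h2 := congrArg (coeff I) hh
    have h3 := congrArg (coeff J) hh
    simp only [coeff_map, coeff_C_mul, RingHom.coe_coe] at h2 h3
    simp only [hs2, map_sub, map_mul, h2, h3]
    ring

theorem aux_linalg {F : Type*} [Field F] (D : Derivation ℤ F F) (C : Subfield F)
    (hCalg : IsAlgClosed ↥C) (hC : ∀ c ∈ C, D c = 0) {ι : Type*} [Fintype ι] (b : ι → F) (κ : F)
    (c : ι → ι → C) (hb : ∀ i, D (b i) = κ * b i + ∑ j, (c i j : F) * b j)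
    (i0 i1 : ι) (h0 : b i0 ≠ 0) (h1 : ∀ m ∈ C, b i1 ≠ m * b i0) :
    ∃ p ∈ Submodule.span C (Set.range b), ∃ q ∈ Submodule.span C (Set.range b), 
      p ≠ 0 ∧ (∀ m ∈ C, q ≠ m * p) ∧ ∃ e ∈ C, ∃ e' ∈ C, ∃ β ∈ C, D p = (κ + e) * p ∧ D q = (κ + e') * q + β * p := by
  classical
  let W := Submodule.span C (Set.range b)
  have hbW : ∀ i, b i ∈ W := fun i => Submodule.subset_span ⟨i, rfl⟩
  let T0 : F →ₗ[C] F := 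
    { toFun := fun y => D y - κ * y
      map_add' := by intro y z; simp; ring
      map_smul' := by
        intro m y
        simp only [Subfield.smul_def, smul_eq_mul, Derivation.leibniz, hC m m.2, RingHom.id_apply]
        ring }
  have hT0 : ∀ y ∈ W, T0 y ∈ W := by
    intro y hy
    have : W ≤ W.comap T0 := by
      rw [Submodule.span_le]
      rintro _ ⟨i, rfl⟩
      show D (b i) - κ * b i ∈ W
      rw [hb, add_sub_cancel_left]
      exact Submodule.sum_mem _ fun j _ => Submodule.smul_mem _ (c i j) (hbW j)
    exact this hy
  let T : Module.End C W := T0.restrict hT0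
  have hTv : ∀ y : W, ((T y : W) : F) = D y - κ * y := fun y => rfl
  have hWf : Module.Finite C W := Module.Finite.span_of_finite C (Set.finite_range b)
  have hWn : Nontrivial W := ⟨⟨⟨b i0, hbW i0⟩, 0, fun h => h0 (congrArg Subtype.val h)⟩⟩
  obtain ⟨e, he⟩ := Module.End.exists_eigenvalue T
  obtain ⟨p, hp⟩ := he.exists_hasEigenvector
  let P : Submodule C W := Submodule.span C {p}
  have hTp : T p = e • p := hp.apply_eq_smul
  have hP : P ≤ P.comap T := by
    rw [Submodule.span_le]
    rintro _ rfl
    show T _ ∈ P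
    rw [hTp]
    exact Submodule.smul_mem _ _ (Submodule.mem_span_singleton_self _)
  have hp0 : p ≠ 0 := hp.2
  have hPt : P ≠ ⊤ := by
    intro hh
    have m0 : (⟨b i0, hbW i0⟩ : W) ∈ P := hh ▸ Submodule.mem_top
    have m1 : (⟨b i1, hbW i1⟩ : W) ∈ P := hh ▸ Submodule.mem_top
    obtain ⟨r0, hr0⟩ := Submodule.mem_span_singleton.1 m0
    obtain ⟨r1, hr1⟩ := Submodule.mem_span_singleton.1 m1
    have e0 : (r0 : F) * p = b i0 := congrArg Subtype.val hr0
    have e1 : (r1 : F) * p = b i1 := congrArg Subtype.val hr1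
    have : (r0 : F) ≠ 0 := by
      intro h; apply h0; rw [← e0, h, zero_mul]
    apply h1 (r1 / r0) (C.div_mem r1.2 r0.2)
    rw [← e0, ← e1]; field_simp
  have hQn : Nontrivial (W ⧸ P) := Submodule.Quotient.nontrivial_iff.2 hPt
  obtain ⟨e', he'⟩ := Module.End.exists_eigenvalue (P.mapQ P T hP)
  obtain ⟨qq, hq⟩ := he'.exists_hasEigenvector
  obtain ⟨q, rfl⟩ := Submodule.Quotient.mk_surjective P qq
  have hq0 : q ∉ P := fun h => hq.2 ((Submodule.Quotient.mk_eq_zero P).2 h)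
  have hTq : T q - e' • q ∈ P := by
    rw [← Submodule.Quotient.mk_eq_zero, Submodule.Quotient.mk_sub, Submodule.Quotient.mk_smul, sub_eq_zero]
    exact hq.apply_eq_smul
  obtain ⟨β, hβ⟩ := Submodule.mem_span_singleton.1 hTq
  refine ⟨p, p.2, q, q.2, fun h => hp0 (Subtype.ext h), ?_, e, e.2, e', e'.2, β, β.2, ?_, ?_⟩
  · intro m hm hh
    exact hq0 (Submodule.mem_span_singleton.2 ⟨⟨m, hm⟩, Subtype.ext hh.symm⟩)
  · have := congrArg Subtype.val hTp
    rw [hTv] at this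
    have h2 : D p - κ * p = e * p := this
    linear_combination h2
  · have := congrArg Subtype.val hβ
    have h2 : (β : F) * p = (D q - κ * q) - e' * q := this
    linear_combination -h2

theorem aux_final {F : Type*} [Field F] (D : Derivation ℤ F F) (C K : Subfield F) (hCK : C ≤ K)
    (hC : ∀ c ∈ C, D c = 0) (p q : F) (hp : p ∈ K) (hq : q ∈ K) (hp0 : p ≠ 0) (hpq : ∀ m ∈ C, q ≠ m * p)
    (κ e e' β : F) (he : e ∈ C) (he' : e' ∈ C) (hβ : β ∈ C) (h1 : D p = (κ + e) * p) 
    (h2 : D q = (κ + e') * q + β * p) : ∃ z ∈ K, z ∉ C ∧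
      (D z = 0 ∨ D z = 1 ∨ ∃ c ∈ C, c ≠ 0 ∧ D z = c * z) := by
  have hz : D (q / p) = (e' - e) * (q / p) + β := by
    rw [Derivation.leibniz_div, h1, h2]
    simp only [smul_eq_mul]
    field_simp
    ring
  have hzC : ∀ m ∈ C, ∀ r ∈ C, r ≠ 0 → r * (q / p) + m ∉ C := by
    intro m hm r hr hr0 hh
    apply hpq ((r * (q / p) + m - m) / r) (C.div_mem (C.sub_mem hh hm) hr)
    field_simp
    ring
  have hzK : q / p ∈ K := K.div_mem hq hp
  by_cases hee : e' - e = 0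
  · by_cases hb : β = 0
    · refine ⟨q / p, hzK, ?_, Or.inl ?_⟩
      · simpa using hzC 0 C.zero_mem 1 C.one_mem one_ne_zero
      · rw [hz, hee, hb]; simp
    · refine ⟨β⁻¹ * (q / p), K.mul_mem (hCK (C.inv_mem hβ)) hzK, ?_, Or.inr (Or.inl ?_)⟩
      · simpa using hzC 0 C.zero_mem β⁻¹ (C.inv_mem hβ) (inv_ne_zero hb)
      · rw [Derivation.leibniz, hz, hee, hC _ (C.inv_mem hβ)]
        simp [hb]
  · have hm : β / (e' - e) ∈ C := C.div_mem hβ (C.sub_mem he' he)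
    refine ⟨q / p + β / (e' - e), K.add_mem hzK (hCK hm), ?_, Or.inr (Or.inr ⟨e' - e, C.sub_mem he' he, hee, ?_⟩)⟩
    · simpa using hzC _ hm 1 C.one_mem one_ne_zero
    · rw [map_add, hz, hC _ hm]
      field_simp
      ring


/-- The polynomial ring `L[x]` inside `F`. -/
def auxR {F : Type*} [Field F] {n : ℕ} (L : Subfield F) (x : Fin n → F) : Subring F :=
  Subring.closure (↑L ∪ Set.range x)

/-- The field `L(x)` inside `F`. -/
def auxK {F : Type*} [Field F] {n : ℕ} (L : Subfield F) (x : Fin n → F) : Subfield F :=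
  Subfield.closure (↑L ∪ Set.range x)

/-- Monomials. -/
def auxmon {F : Type*} [Field F] {n : ℕ} (x : Fin n → F) (I : Fin n →₀ ℕ) : F := ∏ i, x i ^ I i

/-- Constants of a derivation. -/
def auxker {F : Type*} [Field F] (d : Derivation ℤ F F) : Subfield F where
  carrier := {y | d y = 0}
  mul_mem' := by intro a b ha hb; simp only [Set.mem_ofPred_eq] at *; simp [ha, hb]
  one_mem' := by simp
  add_mem' := by intro a b ha hb; simp only [Set.mem_ofPred_eq] at *; simp [ha, hb]
  zero_mem' := by simp
  neg_mem' := by intro a ha; simp only [Set.mem_ofPred_eq] at *; simp [ha]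
  inv_mem' := by intro a ha; simp only [Set.mem_ofPred_eq] at *; simp [Derivation.leibniz_inv, ha]

section
variable {F : Type*} [Field F] {n : ℕ} (L : Subfield F) (x : Fin n → F)

theorem auxker_mem {d : Derivation ℤ F F} {y : F} : y ∈ auxker d ↔ d y = 0 := Iff.rfl

theorem auxR_L {y : F} (h : y ∈ L) : y ∈ auxR L x := Subring.subset_closure (Or.inl h)
theorem auxR_x (i : Fin n) : x i ∈ auxR L x := Subring.subset_closure (Or.inr ⟨i, rfl⟩)
theorem auxK_L {y : F} (h : y ∈ L) : y ∈ auxK L x := Subfield.subset_closure (Or.inl h)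
theorem auxK_x (i : Fin n) : x i ∈ auxK L x := Subfield.subset_closure (Or.inr ⟨i, rfl⟩)

theorem auxmon_R (I : Fin n →₀ ℕ) : auxmon x I ∈ auxR L x :=
  prod_mem fun i _ => pow_mem (auxR_x L x i) _

theorem auxmon_K (I : Fin n →₀ ℕ) : auxmon x I ∈ auxK L x :=
  prod_mem fun i _ => pow_mem (auxK_x L x i) _

theorem auxR_le (S : Subring F) (hL : ∀ y ∈ L, y ∈ S) (hx : ∀ i, x i ∈ S) : auxR L x ≤ S := by
  apply Subring.closure_le.2
  rintro y (hy | ⟨i, rfl⟩)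
  · exact hL y hy
  · exact hx i

theorem auxK_le (S : Subfield F) (hL : ∀ y ∈ L, y ∈ S) (hx : ∀ i, x i ∈ S) : auxK L x ≤ S := by
  apply Subfield.closure_le.2
  rintro y (hy | ⟨i, rfl⟩)
  · exact hL y hy
  · exact hx i

theorem auxR_le_K {y : F} (h : y ∈ auxR L x) : y ∈ auxK L x :=
  auxR_le L x (auxK L x).toSubring (fun _ h => auxK_L L x h) (auxK_x L x) h

theorem auxR_mono {L L' : Subfield F} (hL : L ≤ L') {y : F} (h : y ∈ auxR L x) : y ∈ auxR L' x :=
  auxR_le L x _ (fun _ h => auxR_L L' x (hL h)) (auxR_x L' x) h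

theorem auxK_mono {L L' : Subfield F} (hL : L ≤ L') {y : F} (h : y ∈ auxK L x) : y ∈ auxK L' x :=
  auxK_le L x _ (fun _ h => auxK_L L' x (hL h)) (auxK_x L' x) h

theorem auxK_frac {y : F} (h : y ∈ auxK L x) : ∃ a ∈ auxR L x, ∃ b ∈ auxR L x, b ≠ 0 ∧ y = a / b := by
  obtain ⟨a, ha, b, hb, rfl⟩ := Subfield.mem_closure_iff.1 h
  by_cases hb0 : b = 0
  · exact ⟨0, zero_mem _, 1, one_mem _, one_ne_zero, by simp [hb0]⟩
  · exact ⟨a, ha, b, hb, hb0, rfl⟩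

theorem auxR_aeval (p : MvPolynomial (Fin n) L) : MvPolynomial.aeval x p = ∑ I ∈ p.support, ((p.coeff I : L) : F) * auxmon x I := by
  rw [MvPolynomial.aeval_def, MvPolynomial.eval₂_eq']; rfl

theorem auxR_iff {y : F} : y ∈ auxR L x ↔ ∃ p : MvPolynomial (Fin n) L, MvPolynomial.aeval x p = y := by
  constructor
  · intro h
    have := auxR_le L x (MvPolynomial.aeval (R := L) x).range.toSubring ?_ ?_ h
    · exact this
    · intro y hy
      exact ⟨MvPolynomial.C ⟨y, hy⟩, by simp; rfl⟩
    · intro i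
      exact ⟨MvPolynomial.X i, by simp⟩
  · rintro ⟨p, rfl⟩
    rw [auxR_aeval]
    exact sum_mem fun I _ => mul_mem (auxR_L L x (p.coeff I).2) (auxmon_R L x I)

theorem auxR_exp {y : F} (h : y ∈ auxR L x) : ∃ (s : Finset (Fin n →₀ ℕ)) (c : (Fin n →₀ ℕ) → F),
    (∀ I, c I ∈ L) ∧ y = ∑ I ∈ s, c I * auxmon x I := by
  obtain ⟨p, rfl⟩ := (auxR_iff L x).1 h
  exact ⟨p.support, fun I => ((p.coeff I : L) : F), fun I => (p.coeff I).2, auxR_aeval L x p⟩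

theorem aux_indep_iff : AlgebraicIndependent L x ↔ ∀ (s : Finset (Fin n →₀ ℕ)) (c : (Fin n →₀ ℕ) → F),
    (∀ I, c I ∈ L) → ∑ I ∈ s, c I * auxmon x I = 0 → ∀ I ∈ s, c I = 0 := by
  classical
  rw [algebraicIndependent_iff]
  constructor
  · intro h s c hc hs I hI
    let p : MvPolynomial (Fin n) L := ∑ I ∈ s, MvPolynomial.monomial I (⟨c I, hc I⟩ : L)
    have hp : MvPolynomial.aeval x p = 0 := by
      rw [map_sum, ← hs]
      refine Finset.sum_congr rfl fun I _ => ?_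
      rw [MvPolynomial.aeval_monomial, Finsupp.prod_pow]; rfl
    have := congrArg (MvPolynomial.coeff I) (h p hp)
    simp only [p, MvPolynomial.coeff_sum, MvPolynomial.coeff_monomial, MvPolynomial.coeff_zero] at this
    rw [Finset.sum_ite_eq' s I] at this
    simp only [hI, if_true] at this
    exact congrArg Subtype.val this
  · intro h p hp
    rw [auxR_aeval] at hp
    have := h p.support (fun I => ((p.coeff I : L) : F)) (fun I => (p.coeff I).2) hp
    ext I
    by_cases hI : I ∈ p.support
    · simpa using this I hI
    · simp [MvPolynomial.notMem_support_iff.1 hI]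

theorem aux_ufd (hx : AlgebraicIndependent L x) : UniqueFactorizationMonoid (auxR L x) := by
  let f : MvPolynomial (Fin n) L →+* auxR L x := 
    (MvPolynomial.aeval (R := L) x : MvPolynomial (Fin n) L →+* F).codRestrict (auxR L x) (fun p => (auxR_iff L x).2 ⟨p, rfl⟩)
  have hf : Function.Bijective f := by
    constructor
    · intro p q hpq
      exact hx (congrArg Subtype.val hpq)
    · rintro ⟨y, hy⟩
      obtain ⟨p, hp⟩ := (auxR_iff L x).1 hy
      exact ⟨p, Subtype.ext hp⟩
  exact (RingEquiv.ofBijective f hf).toMulEquiv.uniqueFactorizationMonoid inferInstance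

theorem aux_der_R (d : Derivation ℤ F F) (hL : ∀ y ∈ L, d y ∈ L) (h : F) (hh : h ∈ auxR L x) 
    (hx : ∀ i, h * d (x i) ∈ auxR L x) {y : F} (hy : y ∈ auxR L x) : h * d y ∈ auxR L x := by
  induction hy using Subring.closure_induction with
  | mem y hy =>
    rcases hy with hy | ⟨i, rfl⟩
    · exact mul_mem hh (auxR_L L x (hL y hy))
    · exact hx i
  | zero => simp
  | one => simp
  | add y z _ _ h1 h2 => rw [map_add, mul_add]; exact add_mem h1 h2
  | neg y _ h1 => rw [map_neg, mul_neg]; exact neg_mem h1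
  | mul y z hy hz h1 h2 => 
    rw [Derivation.leibniz]
    simp only [smul_eq_mul]
    rw [show h * (y * d z + z * d y) = y * (h * d z) + z * (h * d y) by ring]
    exact add_mem (mul_mem hy h2) (mul_mem hz h1)

theorem aux_der_K (d : Derivation ℤ F F) (hL : ∀ y ∈ L, d y ∈ L)
    (hx : ∀ i, d (x i) ∈ auxK L x) {y : F} (hy : y ∈ auxK L x) : d y ∈ auxK L x := by
  induction hy using Subfield.closure_induction with
  | mem y hy =>
    rcases hy with hy | ⟨i, rfl⟩
    · exact auxK_L L x (hL y hy)
    · exact hx i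
  | one => simp
  | add y z _ _ h1 h2 => rw [map_add]; exact add_mem h1 h2
  | neg y _ h1 => rw [map_neg]; exact neg_mem h1
  | inv y hy h1 => 
    rw [Derivation.leibniz_inv, smul_eq_mul]
    exact mul_mem (neg_mem (pow_mem (inv_mem hy) _)) h1
  | mul y z hy hz h1 h2 => 
    rw [Derivation.leibniz]
    exact add_mem (mul_mem hy h2) (mul_mem hz h1)

theorem aux_common {ι : Type*} [Fintype ι] (b : ι → F) (hb : ∀ i, b i ∈ auxK L x) : 
    ∃ h ∈ auxR L x, h ≠ 0 ∧ ∀ i, h * b i ∈ auxR L x := by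
  classical
  choose p hp q hq hq0 hpq using fun i => auxK_frac L x (hb i)
  refine ⟨∏ i, q i, prod_mem fun i _ => hq i, Finset.prod_ne_zero_iff.2 fun i _ => hq0 i, fun i => ?_⟩
  rw [← Finset.mul_prod_erase Finset.univ q (Finset.mem_univ i), hpq]
  rw [show q i * (∏ j ∈ Finset.univ.erase i, q j) * (p i / q i) = (∏ j ∈ Finset.univ.erase i, q j) * p i by
    have := hq0 i
    field_simp]
  exact mul_mem (prod_mem fun i _ => hq i) (hp i)

theorem aux_exists_v (hx : AlgebraicIndependent L x) (hgen : auxK L x = ⊤) (f : Fin n → F) : 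
    ∃ v : Derivation ℤ F F, (∀ m ∈ L, v m = 0) ∧ ∀ i, v (x i) = f i := by
  let R := MvPolynomial (Fin n) L
  let ev : R →+* F := (MvPolynomial.aeval (R := L) x : MvPolynomial (Fin n) L →+* F)
  let : Algebra R F := ev.toAlgebra
  have hev : ∀ p : R, algebraMap R F p = MvPolynomial.aeval x p := fun p => rfl
  have hinj : Function.Injective (algebraMap R F) := hx
  have : IsFractionRing R F := by
    have : FaithfulSMul R F := (faithfulSMul_iff_algebraMap_injective R F).2 hinj
    apply IsFractionRing.of_field
    intro z
    obtain ⟨a, ha, b, hb, hb0, rfl⟩ := auxK_frac L x (show z ∈ auxK L x by rw [hgen]; trivial)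
    obtain ⟨p, rfl⟩ := (auxR_iff L x).1 ha
    obtain ⟨q, rfl⟩ := (auxR_iff L x).1 hb
    exact ⟨p, q, rfl⟩
  let ρ : R →+* TrivSqZeroExt F F := 
    (MvPolynomial.aeval (R := L) (fun i => (TrivSqZeroExt.inl (x i) + TrivSqZeroExt.inr (f i) : TrivSqZeroExt F F)) : MvPolynomial (Fin n) L →+* _)
  have hρ : ∀ p : R, (ρ p).fst = algebraMap R F p := by
    intro p
    have : ((TrivSqZeroExt.fstHom L F F).comp (MvPolynomial.aeval (R := L) (fun i => (TrivSqZeroExt.inl (x i) + TrivSqZeroExt.inr (f i) : TrivSqZeroExt F F)))) = MvPolynomial.aeval x := by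
      ext i; simp
    exact congrArg (fun g => g p) this
  have hu : ∀ y : nonZeroDivisors R, IsUnit (ρ y) := by
    intro y
    rw [TrivSqZeroExt.isUnit_iff_isUnit_fst, hρ]
    exact IsLocalization.map_units F y
  let ψ : F →+* TrivSqZeroExt F F := IsLocalization.lift hu
  have hψ : ∀ p : R, ψ (algebraMap R F p) = ρ p := fun p => IsLocalization.lift_eq hu p
  have hfst : ∀ y : F, (ψ y).fst = y := by
    intro y
    have : ((TrivSqZeroExt.fstHom F F F : _ →+* F).comp ψ) = RingHom.id F := by
      apply IsLocalization.ringHom_ext (nonZeroDivisors R)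
      refine RingHom.ext fun p => ?_
      show (ψ (algebraMap R F p)).fst = algebraMap R F p
      rw [hψ, hρ]
    exact congrArg (fun g => g y) this
  let v0 : F →+ F := ((TrivSqZeroExt.sndHom F F) : _ →+ F).comp (ψ : F →+ TrivSqZeroExt F F)
  have hv0 : ∀ y, v0 y = (ψ y).snd := fun y => rfl
  refine ⟨Derivation.mk' v0.toIntLinearMap ?_, ?_, ?_⟩
  · intro a b
    simp [hv0, hfst]
    ring
  · intro m hm
    show (ψ m).snd = 0
    have : m = algebraMap R F (MvPolynomial.C ⟨m, hm⟩) := by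
      rw [hev]; simp; rfl
    rw [this, hψ]
    simp only [ρ, RingHom.coe_coe]
    rw [MvPolynomial.aeval_C]
    rfl
  · intro i
    show (ψ (x i)).snd = f i
    have : x i = algebraMap R F (MvPolynomial.X i) := by
      rw [hev]; simp
    rw [this, hψ]
    simp only [ρ, RingHom.coe_coe]
    rw [MvPolynomial.aeval_X, TrivSqZeroExt.snd_add, TrivSqZeroExt.snd_inl, TrivSqZeroExt.snd_inr, zero_add]

end


theorem aux_chain {F : Type*} [Field F] {n : ℕ} (L : Subfield F) (x : Fin n → F)
    (d : Derivation ℤ F F) (hd : ∀ y ∈ L, d y = 0) (p : MvPolynomial (Fin n) L) :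
    d (MvPolynomial.aeval x p) = ∑ j, d (x j) * MvPolynomial.aeval x (MvPolynomial.pderiv j p) := by
  classical
  induction p using MvPolynomial.induction_on with
  | C a => 
    rw [MvPolynomial.aeval_C, show algebraMap L F a = (a : F) from rfl, hd a a.2]
    simp
  | add p q hp hq => simp [hp, hq, mul_add, Finset.sum_add_distrib]
  | mul_X p i hp => 
    rw [map_mul, Derivation.leibniz, hp]
    simp only [MvPolynomial.aeval_X, smul_eq_mul, Derivation.leibniz, map_add, map_mul, mul_add, Finset.sum_add_distrib,
      Finset.mul_sum, MvPolynomial.pderiv_X]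
    congr 1
    · rw [Finset.sum_eq_single i]
      · simp; ring
      · intro j _ hj; simp [Pi.single_apply, hj.symm]
      · simp
    · exact Finset.sum_congr rfl fun j _ => by ring

theorem aux_spec {F : Type*} [Field F] (D v : Derivation ℤ F F)
    (C M : Subfield F) (hCM : C ≤ M) (hCalg : IsAlgClosed ↥C)
    (hC : ∀ c ∈ C, D c = 0) {n : ℕ} (x : Fin n → F) (hxind : AlgebraicIndependent ↥M x)
    (hgen : auxK M x = ⊤) (hf : ∀ i, D (x i) ∈ auxK C x)
    (hvM : ∀ m ∈ M, v m = 0) (hvx : ∀ i, v (x i) = D (x i))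
    (W : Submodule M F) (hW : W.FG) (κ : F) (hκ : ∀ y ∈ W, v y - κ * y ∈ W)
    (p q : F) (hp : p ∈ W) (hq : q ∈ W) (hp0 : p ≠ 0) (hpq : ∀ m ∈ M, q ≠ m * p) :
    ∃ z ∈ auxK C x, z ∉ C ∧ (D z = 0 ∨ D z = 1 ∨ ∃ c ∈ C, c ≠ 0 ∧ D z = c * z) := by
  classical
  obtain ⟨S0, hS0⟩ := hW
  let S : Finset F := insert p (insert q S0)
  have hS : Submodule.span M (S : Set F) = W := by
    apply le_antisymm
    · rw [Submodule.span_le]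
      intro y hy
      simp only [S, Finset.coe_insert, Set.mem_insert_iff] at hy
      rcases hy with rfl | rfl | hy
      · exact hp
      · exact hq
      · rw [← hS0]; exact Submodule.subset_span hy
    · rw [← hS0]
      apply Submodule.span_mono
      intro y hy
      simp only [S, Finset.coe_insert, Set.mem_insert_iff]
      exact Or.inr (Or.inr hy)
  let b : S → F := fun s => s.1
  have hbr : Set.range b = (S : Set F) := by simp [b]
  have hex : ∀ i : S, ∃ c : S → M, ∑ j, c j • b j = v (b i) - κ * b i := by
    intro i
    have h1 : v (b i) - κ * b i ∈ Submodule.span M (Set.range b) := by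
      rw [hbr, hS]
      apply hκ
      rw [← hS]; exact Submodule.subset_span i.2
    exact (Submodule.mem_span_range_iff_exists_fun M).1 h1
  choose c hc using hex
  have htop : ∀ y : F, y ∈ auxK M x := fun y => by rw [hgen]; trivial
  obtain ⟨d, hd, hd0, hdb⟩ := aux_common M x b (fun i => htop _)
  obtain ⟨a, ha, g, hg, hg0, hag⟩ := auxK_frac M x (htop (κ + v d / d))
  obtain ⟨h, hh, hh0, hhf⟩ := aux_common C x (fun i => D (x i)) hf
  choose P hP using fun i => (auxR_iff M x).1 (hdb i)
  obtain ⟨a, rfl⟩ := (auxR_iff M x).1 ha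
  obtain ⟨g, rfl⟩ := (auxR_iff M x).1 hg
  obtain ⟨h, rfl⟩ := (auxR_iff C x).1 hh
  choose H hH using fun i => (auxR_iff C x).1 (hhf i)
  let : Algebra C M := (Subfield.inclusion hCM).toAlgebra
  have hmap : ∀ r : MvPolynomial (Fin n) C, MvPolynomial.aeval x (MvPolynomial.map (algebraMap C M) r) = MvPolynomial.aeval x r := by
    intro r
    rw [MvPolynomial.aeval_def, MvPolynomial.eval₂_map]
    rfl
  have hvP : ∀ i, v (MvPolynomial.aeval x (P i)) = (κ + v d / d) * MvPolynomial.aeval x (P i) + ∑ j, (c i j : F) * MvPolynomial.aeval x (P j) := by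
    intro i
    simp only [hP]
    have h1 : ∑ j, (c i j : F) * b j = v (b i) - κ * b i := hc i
    have h2 : ∑ j, (c i j : F) * (d * b j) = d * (v (b i) - κ * b i) := by
      rw [← h1, Finset.mul_sum]
      exact Finset.sum_congr rfl fun j _ => by ring
    rw [h2, Derivation.leibniz]
    simp only [smul_eq_mul]
    field_simp
    ring
  have hg0' : g ≠ 0 := by
    rintro rfl; simp at hg0
  let i0 : S := ⟨p, by simp [S]⟩
  let i1 : S := ⟨q, by simp [S]⟩
  obtain ⟨P', a', g', c', hg', hid', h0', h1'⟩ := aux_spec_poly P a g c h H hg0' (by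
    intro i
    apply hxind
    simp only [map_mul, map_sum, map_add, hmap, hH, MvPolynomial.aeval_C]
    have e1 := aux_chain M x v hvM (P i)
    simp only [hvx] at e1
    have e2 : ∀ y : M, algebraMap M F y = y := fun _ => rfl
    simp only [e2]
    have e3 : ∑ j, MvPolynomial.aeval x h * D (x j) * MvPolynomial.aeval x (MvPolynomial.pderiv j (P i)) = MvPolynomial.aeval x h * v (MvPolynomial.aeval x (P i)) := by
      rw [e1, Finset.mul_sum]
      exact Finset.sum_congr rfl fun j _ => by ring
    rw [e3, hvP, hag]
    field_simp) i0 i1 (by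
      intro h
      have := hP i0
      rw [h, map_zero] at this
      exact (mul_ne_zero hd0 hp0) this.symm) (by
      intro m h
      have h1 := hP i1
      have h0 := hP i0
      rw [h, map_mul, h0, MvPolynomial.aeval_C] at h1
      have h2 : (m : F) * (d * p) = d * q := h1
      apply hpq m m.2
      apply mul_left_cancel₀ hd0
      rw [← h2]; ring)
  have hxC : AlgebraicIndependent C x := by
    intro r s hrs
    have : MvPolynomial.map (algebraMap C M) r = MvPolynomial.map (algebraMap C M) s := by
      apply hxind
      rw [hmap, hmap]; exact hrs
    exact MvPolynomial.map_injective _ (algebraMap C M).injective this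
  have ne : ∀ r : MvPolynomial (Fin n) C, r ≠ 0 → MvPolynomial.aeval x r ≠ 0 := by
    intro r hr h
    exact hr (hxC (by simpa using h))
  have hgg := ne _ hg'
  obtain ⟨p1, hp1, q1, hq1, hp10, hpq1, e, he, e', he', β, hβ, k1, k2⟩ := aux_linalg D C hCalg hC (fun i => MvPolynomial.aeval x (P' i)) 
    (MvPolynomial.aeval x a' / MvPolynomial.aeval x g') c' (by
      intro i
      have e1 := aux_chain C x D hC (P' i)
      have e2 := congrArg (MvPolynomial.aeval x) (hid' i)
      simp only [map_mul, map_sum, map_add, hH, MvPolynomial.aeval_C] at e2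
      have e3 : ∑ j, MvPolynomial.aeval x h * D (x j) * MvPolynomial.aeval x (MvPolynomial.pderiv j (P' i)) = MvPolynomial.aeval x h * D (MvPolynomial.aeval x (P' i)) := by
        rw [e1, Finset.mul_sum]
        exact Finset.sum_congr rfl fun j _ => by ring
      rw [e3] at e2
      have e4 : ∀ y : C, algebraMap C F y = y := fun _ => rfl
      simp only [e4] at e2
      apply mul_left_cancel₀ (mul_ne_zero hh0 hgg)
      rw [mul_add]
      have : MvPolynomial.aeval x h * MvPolynomial.aeval x g' * (MvPolynomial.aeval x a' / MvPolynomial.aeval x g' * MvPolynomial.aeval x (P' i)) = MvPolynomial.aeval x h * MvPolynomial.aeval x a' * MvPolynomial.aeval x (P' i) := by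
        field_simp
      rw [this]
      linear_combination e2) i0 i1 (ne _ h0') (by
        intro m hm h
        apply h1' ⟨m, hm⟩
        apply hxC
        rw [map_mul, MvPolynomial.aeval_C]
        exact h)
  have hCK : C ≤ auxK C x := fun y hy => auxK_L C x hy
  have hsp : ∀ y ∈ Submodule.span C (Set.range (fun i => MvPolynomial.aeval x (P' i))), y ∈ auxK C x := by
    intro y hy
    induction hy using Submodule.span_induction with
    | mem y hy => 
      obtain ⟨i, rfl⟩ := hy
      exact auxR_le_K C x ((auxR_iff C x).2 ⟨_, rfl⟩)
    | zero => exact zero_mem _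
    | add y z _ _ h1 h2 => exact add_mem h1 h2
    | smul m y _ h1 => exact mul_mem (hCK m.2) h1
  exact aux_final D C (auxK C x) hCK hC p1 q1 (hsp _ hp1) (hsp _ hq1) hp10 hpq1 _ e e' β he he' hβ k1 k2


theorem aux_wr1 {F : Type*} [Field F] (v : Derivation ℤ F F) (F0 : Subfield F)
    (hF0 : ∀ y ∈ F0, v y ∈ F0) {ι : Type*} [DecidableEq ι] (g : ι → F) (s : ℕ) :
    ∀ (S : Finset ι), S.card = s → ∀ (c : ι → F), (∀ l, c l ∈ F0) → (∃ l ∈ S, c l ≠ 0) → 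
    (∀ i < s, ∑ l ∈ S, c l * v^[i] (g l) = 0) → 
    ∃ c' : ι → F, (∀ l, c' l ∈ F0 ∧ v (c' l) = 0) ∧ (∃ l ∈ S, c' l ≠ 0) ∧ (∀ l ∉ S, c' l = 0) ∧ 
      ∑ l ∈ S, c' l * g l = 0 := by
  induction s with
  | zero => 
    rintro S hS c - ⟨l, hl, -⟩
    rw [Finset.card_eq_zero.1 hS] at hl
    simp at hl
  | succ s ih =>
    rintro S hS c hc ⟨l0, hl0, hcl0⟩ hsum
    let e : ι → F := fun l => c l / c l0
    have he : ∀ l, e l ∈ F0 := fun l => div_mem (hc l) (hc l0)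
    have he0 : e l0 = 1 := div_self hcl0
    have hes : ∀ i < s + 1, ∑ l ∈ S, e l * v^[i] (g l) = 0 := by
      intro i hi
      have : ∑ l ∈ S, e l * v^[i] (g l) = (∑ l ∈ S, c l * v^[i] (g l)) / c l0 := by
        rw [Finset.sum_div]
        exact Finset.sum_congr rfl fun l _ => by simp only [e]; ring
      rw [this, hsum i hi, zero_div]
    have hve : ∀ i < s, ∑ l ∈ S.erase l0, v (e l) * v^[i] (g l) = 0 := by
      intro i hi
      have h1 := congrArg v (hes i (by omega))
      rw [map_sum, map_zero] at h1
      simp only [Derivation.leibniz, smul_eq_mul, Finset.sum_add_distrib] at h1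
      have h2 := hes (i+1) (by omega)
      simp only [Function.iterate_succ_apply'] at h2
      rw [h2, zero_add, ← Finset.add_sum_erase S _ hl0, he0] at h1
      simp only [Derivation.map_one_eq_zero, mul_zero, zero_add] at h1
      rw [← h1]
      exact Finset.sum_congr rfl fun l _ => by ring
    by_cases hall : ∃ l ∈ S.erase l0, v (e l) ≠ 0
    · obtain ⟨c', h1, ⟨l, hl, hl'⟩, h3, h4⟩ := ih (S.erase l0) (by rw [Finset.card_erase_of_mem hl0, hS]; rfl) (fun l => v (e l)) (fun l => hF0 _ (he l)) hall hve
      refine ⟨c', h1, ⟨l, Finset.mem_of_mem_erase hl, hl'⟩, ?_, ?_⟩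
      · intro l hl
        exact h3 l (fun h => hl (Finset.mem_of_mem_erase h))
      · rw [← Finset.add_sum_erase S _ hl0, h4, h3 l0 (Finset.notMem_erase _ _)]; simp
    · push Not at hall
      refine ⟨fun l => if l ∈ S then e l else 0, ?_, ⟨l0, hl0, ?_⟩, ?_, ?_⟩
      · intro l
        by_cases hl : l ∈ S
        · simp only [hl, if_true]
          refine ⟨he l, ?_⟩
          by_cases h : l = l0
          · rw [h, he0]; simp
          · exact hall l (Finset.mem_erase.2 ⟨h, hl⟩)
        · simp [hl]
      · simp [hl0, he0]
      · intro l hl; simp [hl]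
      · rw [← hes 0 (by omega)]
        exact Finset.sum_congr rfl fun l hl => by simp [hl]

theorem aux_iter_mem {F : Type*} [Field F] (v : Derivation ℤ F F) (F0 : Subfield F)
    (hF0 : ∀ y ∈ F0, v y ∈ F0) (i : ℕ) {y : F} (hy : y ∈ F0) : v^[i] y ∈ F0 := by
  induction i with
  | zero => exact hy
  | succ i ih => rw [Function.iterate_succ_apply']; exact hF0 _ ih

theorem aux_wr {F : Type*} [Field F] (v : Derivation ℤ F F) (F0 : Subfield F)
    (hF0 : ∀ y ∈ F0, v y ∈ F0) {ι : Type*} [Fintype ι] (g : ι → F) (hg : ∀ l, g l ∈ F0)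
    (c : ι → F) (hc : c ≠ 0) (h : ∀ i < Fintype.card ι, ∑ l, c l * v^[i] (g l) = 0) : 
    ∃ c' : ι → F, c' ≠ 0 ∧ (∀ l, c' l ∈ F0 ∧ v (c' l) = 0) ∧ ∑ l, c' l * g l = 0 := by
  classical
  let eq := Fintype.equivFin ι
  let A : Matrix ι ι F0 := fun i l => ⟨v^[(eq i : ℕ)] (g l), aux_iter_mem v F0 hF0 _ (hg l)⟩
  have h1 : (A.map F0.subtype).det = 0 := by
    rw [← Matrix.exists_mulVec_eq_zero_iff]
    refine ⟨c, hc, ?_⟩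
    ext i
    simp only [Matrix.mulVec, dotProduct, Matrix.map_apply, Pi.zero_apply]
    rw [← h (eq i) (eq i).2]
    exact Finset.sum_congr rfl fun l _ => mul_comm _ _
  have h2 : A.det = 0 := by
    apply F0.subtype.injective
    rw [RingHom.map_det, map_zero]
    exact h1
  obtain ⟨a, ha, hA⟩ := Matrix.exists_mulVec_eq_zero_iff.2 h2
  obtain ⟨c', k1, ⟨l, -, hl⟩, -, k4⟩ := aux_wr1 v F0 hF0 g (Fintype.card ι) Finset.univ rfl (fun l => (a l : F)) (fun l => (a l).2) (by
    by_contra! hh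
    exact ha (funext fun l => Subtype.ext (hh l (Finset.mem_univ l)))) (by
    intro i hi
    have := congrArg Subtype.val (congrFun hA (eq.symm ⟨i, hi⟩))
    simp only [Matrix.mulVec, dotProduct, A, Pi.zero_apply, Equiv.apply_symm_apply] at this
    rw [AddSubmonoidClass.coe_finsetSum] at this
    rw [← show _ = (0:F) from this]
    exact Finset.sum_congr rfl fun l _ => mul_comm _ _)
  exact ⟨c', fun h => hl (congrFun h l), k1, k4⟩

theorem aux_wr_top {F : Type*} [Field F] (v : Derivation ℤ F F) (M : Subfield F) 
    (hM : ∀ y, v y = 0 → y ∈ M) {ι : Type*} [Fintype ι] (g : ι → F) (hg : LinearIndependent M g)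
    (c : ι → F) (h : ∀ i < Fintype.card ι, ∑ l, c l * v^[i] (g l) = 0) : c = 0 := by
  by_contra hc
  obtain ⟨c', h1, h2, h3⟩ := aux_wr v ⊤ (fun _ _ => trivial) g (fun _ => trivial) c hc h
  apply h1
  have := Fintype.linearIndependent_iff.1 hg (fun l => ⟨c' l, hM _ (h2 l).2⟩) h3
  funext l
  exact congrArg Subtype.val (this l)

theorem aux_mon_li {F : Type*} [Field F] (M : Subfield F) {n : ℕ} (x : Fin n → F) (hxind : AlgebraicIndependent ↥M x)
    (s : Finset (Fin n →₀ ℕ)) : LinearIndependent M (fun I : s => auxmon x I) := by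
  classical
  rw [Fintype.linearIndependent_iff]
  intro g hg I
  have := (aux_indep_iff M x).1 hxind s (fun J => if h : J ∈ s then (g ⟨J, h⟩ : F) else 0) (by
    intro J
    by_cases h : J ∈ s
    · simp [h]
    · simp [h]) (by
    rw [← Finset.sum_coe_sort s]
    rw [← hg]
    exact Finset.sum_congr rfl fun l _ => by simp; rfl) I I.2
  simpa using this

theorem aux_iter_eq {F : Type*} [Field F] (D v : Derivation ℤ F F) (K : Subfield F)
    (hK : ∀ y ∈ K, v y ∈ K) (hKD : ∀ y ∈ K, v y = D y) (i : ℕ) {y : F} (hy : y ∈ K) : v^[i] y = D^[i] y := by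
  induction i with
  | zero => rfl
  | succ i ih => 
    rw [Function.iterate_succ_apply', Function.iterate_succ_apply', ← ih]
    exact hKD _ (aux_iter_mem v K hK i hy)

theorem aux_U1 {F : Type*} [Field F] (D v : Derivation ℤ F F) (M K : Subfield F) {n : ℕ} (x : Fin n → F) 
    (hxind : AlgebraicIndependent ↥M x) (hxK : ∀ I, auxmon x I ∈ K)
    (hK : ∀ y ∈ K, v y ∈ K) (hKD : ∀ y ∈ K, v y = D y) (hM : ∀ y, v y = 0 → y ∈ M) :
    AlgebraicIndependent (auxker D) x := by
  rw [aux_indep_iff]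
  intro s c hc hs
  have hD : ∀ i, ∑ I ∈ s, c I * D^[i] (auxmon x I) = 0 := by
    intro i
    induction i with
    | zero => exact hs
    | succ i ih =>
      have := congrArg D ih
      rw [map_sum, map_zero] at this
      rw [← this]
      refine Finset.sum_congr rfl fun I _ => ?_
      rw [Derivation.leibniz, hc I, Function.iterate_succ_apply']
      simp
  have := aux_wr_top v M hM (fun I : s => auxmon x I) (aux_mon_li M x hxind s) (fun I => c I) (by
    intro i _
    simp only [aux_iter_eq D v K hK hKD i (hxK _)]
    rw [Finset.sum_coe_sort s (fun I => c I * D^[i] (auxmon x I))]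
    exact hD i)
  intro I hI
  exact congrFun this ⟨I, hI⟩

theorem aux_U2 {F : Type*} [Field F] (v : Derivation ℤ F F) (M F0 : Subfield F) {n : ℕ} (x : Fin n → F) 
    (hxind : AlgebraicIndependent ↥M x) (hgen : auxK M x = ⊤) (hxF0 : ∀ I, auxmon x I ∈ F0)
    (hvM : ∀ m ∈ M, v m = 0) (hF0 : ∀ y ∈ F0, v y ∈ F0) (hM : ∀ y, v y = 0 → y ∈ M) (w : F) (hw : w ∈ F0) :
    ∃ P ∈ auxR (M ⊓ F0) x, ∃ Q ∈ auxR (M ⊓ F0) x, Q ≠ 0 ∧ w = P / Q := by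
  obtain ⟨P, hP, Q, hQ, hQ0, hPQ⟩ := auxK_frac M x (y := w) (by rw [hgen]; trivial)
  obtain ⟨s, a, ha, rfl⟩ := auxR_exp M x hP
  obtain ⟨t, b, hb, rfl⟩ := auxR_exp M x hQ
  let g : s ⊕ t → F := Sum.elim (fun I => auxmon x I) (fun J => w * auxmon x J)
  let c : s ⊕ t → F := Sum.elim (fun I => a I) (fun J => - b J)
  have hcM : ∀ l, c l ∈ M := by
    rintro (I | J)
    · exact ha I
    · exact neg_mem (hb J)
  have hg : ∀ l, g l ∈ F0 := by
    rintro (I | J)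
    · exact hxF0 I
    · exact mul_mem hw (hxF0 J)
  have hrel : ∑ l, c l * g l = 0 := by
    simp only [c, g, Fintype.sum_sum_type, Sum.elim_inl, Sum.elim_inr]
    rw [Finset.sum_coe_sort s (fun I => a I * auxmon x I), Finset.sum_coe_sort t (fun J => - b J * (w * auxmon x J))]
    have : ∑ J ∈ t, - b J * (w * auxmon x J) = - (w * ∑ J ∈ t, b J * auxmon x J) := by
      rw [Finset.mul_sum, ← Finset.sum_neg_distrib]
      exact Finset.sum_congr rfl fun J _ => by ring
    rw [this, hPQ]
    field_simp
    ring
  have hreli : ∀ i, ∑ l, c l * v^[i] (g l) = 0 := by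
    intro i
    induction i with
    | zero => exact hrel
    | succ i ih =>
      have := congrArg v ih
      rw [map_sum, map_zero] at this
      rw [← this]
      refine Finset.sum_congr rfl fun I _ => ?_
      rw [Derivation.leibniz, hvM _ (hcM I), Function.iterate_succ_apply']
      simp
  have hc : c ≠ 0 := by
    intro h
    apply hQ0
    apply Finset.sum_eq_zero
    intro J hJ
    have := congrFun h (Sum.inr ⟨J, hJ⟩)
    simp only [c, Sum.elim_inr, Pi.zero_apply, neg_eq_zero] at this
    simp [this]
  obtain ⟨c', h1, h2, h3⟩ := aux_wr v F0 hF0 g hg c hc (fun i _ => hreli i)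
  have hN : ∀ l, c' l ∈ M ⊓ F0 := fun l => ⟨hM _ (h2 l).2, (h2 l).1⟩
  simp only [g, Fintype.sum_sum_type, Sum.elim_inl, Sum.elim_inr] at h3
  set P' := ∑ I : s, c' (Sum.inl I) * auxmon x I with hP'
  set Q' := ∑ J : t, c' (Sum.inr J) * auxmon x J with hQ'
  have h4 : P' + w * Q' = 0 := by
    rw [← h3, hQ', Finset.mul_sum]
    congr 1
    exact Finset.sum_congr rfl fun J _ => by ring
  have hQ'0 : Q' ≠ 0 := by
    intro hz
    rw [hz, mul_zero, add_zero] at h4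
    apply h1
    have k1 := Fintype.linearIndependent_iff.1 (aux_mon_li M x hxind s) (fun I => ⟨c' (Sum.inl I), (hN _).1⟩) h4
    have k2 := Fintype.linearIndependent_iff.1 (aux_mon_li M x hxind t) (fun I => ⟨c' (Sum.inr I), (hN _).1⟩) hz
    funext l
    rcases l with I | J
    · exact congrArg Subtype.val (k1 I)
    · exact congrArg Subtype.val (k2 J)
  refine ⟨-P', neg_mem (sum_mem fun I _ => mul_mem (auxR_L _ x (hN _)) (auxmon_R _ x _)), Q', sum_mem fun I _ => mul_mem (auxR_L _ x (hN _)) (auxmon_R _ x _), hQ'0, ?_⟩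
  field_simp
  linear_combination h4


theorem aux_logder {F : Type*} [Field F] (d : Derivation ℤ F F) (A u : F) (hA : A ≠ 0) (hu : u ≠ 0) (k : ℤ) :
    d (A ^ k * u) / (A ^ k * u) = k * (d A / A) + d u / u := by
  rw [Derivation.leibniz, Derivation.leibniz_zpow, zpow_sub_one₀ hA]
  have : A ^ k ≠ 0 := zpow_ne_zero k hA
  simp only [smul_eq_mul, zsmul_eq_mul]
  field_simp
  ring

section
variable {F : Type*} [Field F] [CharZero F] (O : Subring F) (F0 : Subfield F) (A : F) (hA : A ∈ O) (hA0 : A ≠ 0) (hAi : A⁻¹ ∉ O)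
  (hO : ∀ y ∈ O, y ∈ F0) 
  (hdec : ∀ y ∈ F0, y ≠ 0 → ∃ k : ℤ, ∃ u ∈ O, u⁻¹ ∈ O ∧ y = A ^ k * u)
  (hQ : ∀ k : ℤ, (k : F)⁻¹ ∈ O)

include hA hA0 hAi hO hdec in
theorem aux_unit (y : F) (hy : y ∈ O) (hy' : y / A ∉ O) : y⁻¹ ∈ O := by
  have hy0 : y ≠ 0 := by
    rintro rfl; simp at hy'
  obtain ⟨k, u, hu, hu', rfl⟩ := hdec y (hO y hy) hy0
  have hu0 := right_ne_zero_of_mul hy0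
  rcases lt_trichotomy k 0 with hk | rfl | hk
  · exfalso
    apply hAi
    obtain ⟨m, hm⟩ := Int.eq_ofNat_of_zero_le (show 0 ≤ -k - 1 by omega)
    have : A⁻¹ = A ^ m * ((A ^ k * u) * u⁻¹) := by
      rw [← zpow_natCast, ← hm, mul_assoc, mul_inv_cancel₀ hu0, mul_one, ← zpow_add₀ hA0, ← zpow_neg_one]
      congr 1; ring
    rw [this]
    exact mul_mem (pow_mem hA _) (mul_mem hy hu')
  · simpa using hu'
  · exfalso
    apply hy'
    obtain ⟨m, hm⟩ := Int.eq_ofNat_of_zero_le (show 0 ≤ k - 1 by omega)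
    have : A ^ k * u / A = A ^ m * u := by
      rw [← zpow_natCast, ← hm, zpow_sub_one₀ hA0]
      field_simp
    rw [this]
    exact mul_mem (pow_mem hA _) hu

include hA hA0 hAi hO hdec hQ in
theorem aux_pole (δ : Derivation ℤ F F) (hδ : ∀ y ∈ O, δ y ∈ O) (hδA : δ A / A ∉ O) (k : ℕ) :
    ∃ u ∈ O, u / A ∉ O ∧ δ^[k] (δ A / A) = u / A ^ (k + 1) := by
  induction k with
  | zero => exact ⟨δ A, hδ _ hA, hδA, by simp⟩
  | succ k ih =>
    obtain ⟨u, hu, hu', he⟩ := ih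
    have hui := aux_unit O F0 A hA hA0 hAi hO hdec u hu hu'
    have hu0 : u ≠ 0 := by rintro rfl; simp at hu'
    refine ⟨A * δ u - (k + 1) * δ A * u, ?_, ?_, ?_⟩
    · refine sub_mem (mul_mem hA (hδ _ hu)) (mul_mem (mul_mem ?_ (hδ _ hA)) hu)
      exact_mod_cast natCast_mem O (k+1)
    · intro h
      apply hδA
      have hk : ((k : F) + 1) ≠ 0 := by exact_mod_cast Nat.succ_ne_zero k
      have hk' : ((k : F) + 1)⁻¹ ∈ O := by simpa using hQ (k + 1)
      have : δ A / A = ((k : F) + 1)⁻¹ * u⁻¹ * (δ u - (A * δ u - (k + 1) * δ A * u) / A) := by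
        field_simp
        ring
      rw [this]
      exact mul_mem (mul_mem hk' hui) (sub_mem (hδ _ hu) h)
    · rw [Function.iterate_succ_apply', he, Derivation.leibniz_div, Derivation.leibniz_pow]
      simp only [smul_eq_mul, nsmul_eq_mul, Nat.add_sub_cancel]
      push_cast
      field_simp
      ring

include hA hA0 hAi hO hdec hQ in
theorem aux_pole2 (δ : Derivation ℤ F F) (hδ : ∀ y ∈ O, δ y ∈ O) (hδA : δ A / A ∉ O) (ε : ℕ → F) 
    (hε : ∀ k, ε k ∈ O ∧ (ε k)⁻¹ ∈ O) (m : ℕ) (hsum : ∑ k ∈ Finset.range m, ε k * δ^[k] (δ A / A) ∈ O) :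
    ∀ k < m, ε k = 0 := by
  induction m with
  | zero => intro k hk; omega
  | succ m ih =>
    have hm : ε m = 0 := by
      by_contra hm0
      obtain ⟨u, hu, hu', he⟩ := aux_pole O F0 A hA hA0 hAi hO hdec hQ δ hδ hδA m
      apply hu'
      rw [Finset.sum_range_succ, he] at hsum
      have h1 : u / A = (ε m)⁻¹ * (A ^ m * (∑ k ∈ Finset.range m, ε k * δ^[k] (δ A / A) + ε m * (u / A ^ (m + 1))) - 
          ∑ k ∈ Finset.range m, ε k * (A ^ m * δ^[k] (δ A / A))) := by
        have : ∑ k ∈ Finset.range m, ε k * (A ^ m * δ^[k] (δ A / A)) = A ^ m * ∑ k ∈ Finset.range m, ε k * δ^[k] (δ A / A) := by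
          rw [Finset.mul_sum]
          exact Finset.sum_congr rfl fun _ _ => by ring
        rw [this]
        field_simp
        ring
      rw [h1]
      refine mul_mem (hε m).2 (sub_mem (mul_mem (pow_mem hA _) hsum) (sum_mem fun k hk => mul_mem (hε k).1 ?_))
      obtain ⟨u, hu, -, he⟩ := aux_pole O F0 A hA hA0 hAi hO hdec hQ δ hδ hδA k
      rw [he]
      obtain ⟨j, rfl⟩ : ∃ j, m = k + 1 + j := ⟨m - (k+1), by have := Finset.mem_range.1 hk; omega⟩
      have : A ^ (k + 1 + j) * (u / A ^ (k + 1)) = A ^ j * u := by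
        rw [pow_add]; field_simp
      rw [this]
      exact mul_mem (pow_mem hA _) hu
    rw [Finset.sum_range_succ, hm, zero_mul, add_zero] at hsum
    intro k hk
    rcases Nat.lt_succ_iff_lt_or_eq.1 hk with h | rfl
    · exact ih hsum k h
    · exact hm

include hA0 hQ in
theorem aux_ld1 (d : Derivation ℤ F F) (hd : ∀ y ∈ O, d y ∈ O) (k : ℤ) (hk : k ≠ 0) (u : F) (hu0 : u ≠ 0) (hu : u ∈ O) 
    (hu' : u⁻¹ ∈ O) (h : d (A ^ k * u) / (A ^ k * u) ∈ O) : d A / A ∈ O := by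
  rw [aux_logder d A u hA0 hu0] at h
  have hk' : (k : F) ≠ 0 := by exact_mod_cast hk
  have : d A / A = (k : F)⁻¹ * ((k * (d A / A) + d u / u) - d u * u⁻¹) := by
    field_simp
    ring
  rw [this]
  exact mul_mem (hQ k) (sub_mem h (mul_mem (hd _ hu) hu'))

end

/-- The local ring at a prime. -/
def auxO {F : Type*} [Field F] (R : Subring F) (A : R) (hA : Prime A) : Subring F where
  carrier := {y | ∃ a b : R, ¬ A ∣ b ∧ y = a / b}
  one_mem' := ⟨1, 1, fun h => hA.not_isUnit (isUnit_of_dvd_one h), by simp⟩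
  zero_mem' := ⟨0, 1, fun h => hA.not_isUnit (isUnit_of_dvd_one h), by simp⟩
  neg_mem' := by
    rintro y ⟨a, b, hb, rfl⟩
    exact ⟨-a, b, hb, by simp [neg_div]⟩
  mul_mem' := by
    rintro y z ⟨a, b, hb, rfl⟩ ⟨a', b', hb', rfl⟩
    exact ⟨a * a', b * b', fun h => (hA.dvd_or_dvd h).elim hb hb', by simp; ring⟩
  add_mem' := by
    rintro y z ⟨a, b, hb, rfl⟩ ⟨a', b', hb', rfl⟩
    refine ⟨a * b' + a' * b, b * b', fun h => (hA.dvd_or_dvd h).elim hb hb', ?_⟩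
    have h1 : (b : F) ≠ 0 := fun h => hb (by rw [show b = 0 from Subtype.ext h]; exact dvd_zero _)
    have h2 : (b' : F) ≠ 0 := fun h => hb' (by rw [show b' = 0 from Subtype.ext h]; exact dvd_zero _)
    push_cast
    field_simp

theorem auxO_R {F : Type*} [Field F] (R : Subring F) (A : R) (hA : Prime A) {y : F} (hy : y ∈ R) : y ∈ auxO R A hA :=
  ⟨⟨y, hy⟩, 1, fun h => hA.not_isUnit (isUnit_of_dvd_one h), by simp⟩

theorem auxO_inv {F : Type*} [Field F] (R : Subring F) (A : R) (hA : Prime A) {y : R} (hy : ¬ A ∣ y) : (y : F)⁻¹ ∈ auxO R A hA :=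
  ⟨1, y, hy, by simp⟩

theorem auxO_dvd {F : Type*} [Field F] (R : Subring F) (A : R) (hA : Prime A) {y : R} (hy : (y : F) / A ∈ auxO R A hA) : A ∣ y := by
  obtain ⟨a, b, hb, h⟩ := hy
  have hA0 : (A : F) ≠ 0 := fun h => hA.ne_zero (Subtype.ext h)
  have h1 : (b : F) ≠ 0 := fun h => hb (by rw [show b = 0 from Subtype.ext h]; exact dvd_zero _)
  have : y * b = A * a := by
    apply Subtype.ext
    push_cast
    field_simp at h
    linear_combination h
  exact (hA.dvd_or_dvd ⟨a, this⟩).resolve_right hb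

theorem auxO_der {F : Type*} [Field F] (R : Subring F) (A : R) (hA : Prime A) (d : Derivation ℤ F F) (h : R) (hh : ¬ A ∣ h)
    (hd : ∀ y ∈ R, (h : F) * d y ∈ R) : ∀ y ∈ auxO R A hA, d y ∈ auxO R A hA := by
  rintro y ⟨a, b, hb, rfl⟩
  have h1 : (b : F) ≠ 0 := fun h => hb (by rw [show b = 0 from Subtype.ext h]; exact dvd_zero _)
  have h2 : (h : F) ≠ 0 := fun h' => hh (by rw [show h = 0 from Subtype.ext h']; exact dvd_zero _)
  refine ⟨b * ⟨_, hd a a.2⟩ - a * ⟨_, hd b b.2⟩, h * (b * b), ?_, ?_⟩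
  · intro H
    rcases hA.dvd_or_dvd H with H | H
    · exact hh H
    · exact (hA.dvd_or_dvd H).elim hb hb
  · rw [Derivation.leibniz_div]
    push_cast
    simp only [smul_eq_mul]
    field_simp

theorem auxO_dec {F : Type*} [Field F] (R : Subring F) [UniqueFactorizationMonoid R] (A : R) (hA : Prime A) (a b : R) (ha : a ≠ 0) (hb : b ≠ 0) :
    ∃ k : ℤ, ∃ u ∈ auxO R A hA, u⁻¹ ∈ auxO R A hA ∧ (a : F) / b = A ^ k * u := by
  obtain ⟨i, a', ha', rfl⟩ := WfDvdMonoid.max_power_factor ha hA.irreducible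
  obtain ⟨j, b', hb', rfl⟩ := WfDvdMonoid.max_power_factor hb hA.irreducible
  have hA0 : (A : F) ≠ 0 := fun h => hA.ne_zero (Subtype.ext h)
  refine ⟨i - j, a' / b', ⟨a', b', hb', rfl⟩, ⟨b', a', ha', by simp⟩, ?_⟩
  rw [zpow_sub₀ hA0]
  push_cast
  simp only [zpow_natCast]
  ring

theorem aux_span_stable {F : Type*} [Field F] (L : Subfield F) (δ : Derivation ℤ F F) (hL : ∀ y ∈ L, δ y ∈ L) (T : Set F) (hT : ∀ t ∈ T, δ t = 0)
    (y : F) (hy : y ∈ Submodule.span L T) (k : ℕ) : δ^[k] y ∈ Submodule.span L T := by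
  induction k with
  | zero => exact hy
  | succ k ih =>
    rw [Function.iterate_succ_apply']
    generalize δ^[k] y = z at ih
    induction ih using Submodule.span_induction with
    | mem z hz => rw [hT z hz]; exact zero_mem _
    | zero => simp
    | add a b _ _ h1 h2 => rw [map_add]; exact add_mem h1 h2
    | smul m a ha h1 =>
      rw [Subfield.smul_def, smul_eq_mul, Derivation.leibniz]
      exact add_mem (Submodule.smul_mem _ m h1) (by
        rw [smul_eq_mul, mul_comm]
        exact Submodule.smul_mem _ (⟨δ m, hL _ m.2⟩ : L) ha)

theorem aux_R_span {F : Type*} [Field F] {n : ℕ} (L : Subfield F) (x : Fin n → F) {y : F} (hy : y ∈ auxR L x) : 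
    ∃ s : Finset (Fin n →₀ ℕ), y ∈ Submodule.span L (auxmon x '' (s : Set (Fin n →₀ ℕ))) := by
  obtain ⟨s, c, hc, rfl⟩ := auxR_exp L x hy
  exact ⟨s, sum_mem fun I hI => Submodule.smul_mem _ (⟨c I, hc I⟩ : L) (Submodule.subset_span ⟨I, hI, rfl⟩)⟩

theorem aux_dep {F : Type*} [Field F] (L : Subfield F) (T : Set F) (hT : T.Finite) (y : ℕ → F) (hy : ∀ k, y k ∈ Submodule.span L T) : 
    ∃ (m : ℕ) (ε : ℕ → F), (∀ k, ε k ∈ L) ∧ (∃ k < m, ε k ≠ 0) ∧ ∑ k ∈ Finset.range m, ε k * y k = 0 := by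
  let V := Submodule.span L T
  have : Module.Finite L V := Module.Finite.span_of_finite L hT
  let m := Module.finrank L V + 1
  let f : Fin m → V := fun k => ⟨y k, hy k⟩
  have hnl : ¬ LinearIndependent L f := by
    intro h
    have := h.fintype_card_le_finrank
    simp [m] at this
  rw [Fintype.not_linearIndependent_iff] at hnl
  obtain ⟨g, hg, i, hi⟩ := hnl
  refine ⟨m, fun k => if h : k < m then g ⟨k, h⟩ else 0, ?_, ⟨i, i.2, ?_⟩, ?_⟩
  · intro k
    by_cases h : k < m
    · simp only [h, dif_pos]; exact (g _).2
    · simp [h]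
  · simp only [i.2, dif_pos]
    intro h; exact hi (Subtype.ext h)
  · rw [Finset.sum_range]
    have := congrArg Subtype.val hg
    rw [AddSubmonoidClass.coe_finsetSum] at this
    rw [← show _ = (0 : F) from this]
    refine Finset.sum_congr rfl fun k _ => ?_
    simp only [k.2, dif_pos]
    rfl


theorem aux_comm_log {F : Type*} [Field F] (D δ : Derivation ℤ F F) (hcomm : ∀ y, D (δ y) = δ (D y)) (A : F) :
    D (δ A / A) = δ (D A / A) := by
  rw [Derivation.leibniz_div, Derivation.leibniz_div, hcomm]
  simp only [smul_eq_mul]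
  ring

theorem aux_iter_comm {F : Type*} [Field F] (D δ : Derivation ℤ F F) (hcomm : ∀ y, D (δ y) = δ (D y)) (y : F) (k : ℕ) :
    D (δ^[k] y) = δ^[k] (D y) := by
  induction k with
  | zero => rfl
  | succ k ih => rw [Function.iterate_succ_apply', Function.iterate_succ_apply', hcomm, ih]

theorem aux_iter_mul {F : Type*} [Field F] (δ : Derivation ℤ F F) (t : F) (ht : δ t = 0) (y : F) (k : ℕ) :
    δ^[k] (t * y) = t * δ^[k] y := by
  induction k with
  | zero => rfl
  | succ k ih => rw [Function.iterate_succ_apply', Function.iterate_succ_apply', ih, Derivation.leibniz, ht]; simp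

theorem aux_step2_prime {F : Type*} [Field F] [CharZero F] (D v : Derivation ℤ F F) (hcomm : ∀ y, D (v y) = v (D y))
    (C N : Subfield F) {n : ℕ} (x : Fin n → F) (hCD : ∀ c ∈ C, D c = 0) 
    (hKD : ∀ y ∈ auxK C x, v y = D y) (hvE : ∀ y ∈ auxker D, v y ∈ auxker D)
    (hNF : N ≤ auxK (auxker D) x) (hvN : ∀ m ∈ N, v m = 0)
    (hxE : AlgebraicIndependent (auxker D) x)
    (h : F) (hh : h ∈ auxR C x) (hh0 : h ≠ 0) (hhf : ∀ i, h * D (x i) ∈ auxR C x)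
    (Q l : F) (hQF : Q ∈ auxK (auxker D) x) (hQ0 : Q ≠ 0) (hl : l ∈ auxR N x) (hQl : D Q / Q = l / h) 
    (A : auxR (auxker D) x) (hA : Prime A) (hAC : ∀ c : auxR (auxker D) x, (c : F) ∈ auxR C x → c ≠ 0 → ¬ A ∣ c) :
    v Q / Q ∈ auxO (auxR (auxker D) x) A hA := by
  let E := auxker D
  have hCE : C ≤ E := fun c hc => hCD c hc
  have hufd : UniqueFactorizationMonoid (auxR E x) := aux_ufd E x hxE
  let R := auxR E x
  let O := auxO R A hA
  have hRO : ∀ y ∈ R, y ∈ O := fun y hy => auxO_R R A hA hy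
  have hvx : ∀ i, v (x i) = D (x i) := fun i => hKD _ (auxK_x C x i)
  let δ : Derivation ℤ F F := v - D
  have hδ : ∀ y, δ y = v y - D y := fun y => rfl
  have hhR : h ∈ R := auxR_mono x hCE hh
  have hAh : ¬ A ∣ ⟨h, hhR⟩ := hAC _ hh (fun H => hh0 (congrArg Subtype.val H))
  have hhi : h⁻¹ ∈ O := auxO_inv R A hA hAh
  have hDR : ∀ y ∈ R, h * D y ∈ R := fun y hy => aux_der_R E x D (fun y hy => by rw [show D y = 0 from hy]; exact zero_mem _) h hhR 
    (fun i => auxR_mono x hCE (hhf i)) hy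
  have hvR : ∀ y ∈ R, h * v y ∈ R := fun y hy => aux_der_R E x v hvE h hhR 
    (fun i => by rw [hvx]; exact auxR_mono x hCE (hhf i)) hy
  have hδE : ∀ y ∈ E, δ y ∈ E := fun y hy => by
    rw [hδ, show D y = 0 from hy, sub_zero]; exact hvE y hy
  have hδR : ∀ y ∈ R, δ y ∈ R := fun y hy => by
    have := aux_der_R E x δ hδE 1 (one_mem _) (fun i => by rw [hδ, hvx]; simp) hy
    simpa using this
  have hDO := auxO_der R A hA D ⟨h, hhR⟩ hAh hDR
  have hvO := auxO_der R A hA v ⟨h, hhR⟩ hAh hvR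
  have hδO : ∀ y ∈ O, δ y ∈ O := fun y hy => sub_mem (hvO y hy) (hDO y hy)
  have hA0 : (A : F) ≠ 0 := fun H => hA.ne_zero (Subtype.ext H)
  have hAO : (A : F) ∈ O := hRO _ A.2
  have hAi : (A : F)⁻¹ ∉ O := by
    intro H
    have : A ∣ 1 := auxO_dvd R A hA (by simpa using H)
    exact hA.not_isUnit (isUnit_of_dvd_one this)
  have hOF : ∀ y ∈ O, y ∈ auxK E x := by
    rintro y ⟨a, b, -, rfl⟩
    exact div_mem (auxR_le_K E x a.2) (auxR_le_K E x b.2)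
  have hdec : ∀ y ∈ auxK E x, y ≠ 0 → ∃ k : ℤ, ∃ u ∈ O, u⁻¹ ∈ O ∧ y = A ^ k * u := by
    intro y hy hy0
    obtain ⟨a, ha, b, hb, hb0, rfl⟩ := auxK_frac E x hy
    exact auxO_dec R A hA ⟨a, ha⟩ ⟨b, hb⟩ (fun H => hy0 (by rw [show a = 0 from congrArg Subtype.val H]; simp)) (fun H => hb0 (congrArg Subtype.val H))
  have hQO : ∀ k : ℤ, (k : F)⁻¹ ∈ O := fun k => hRO _ (auxR_L E x (inv_mem (intCast_mem E k)))
  obtain ⟨k, u, hu, hu', hQu⟩ := hdec Q hQF hQ0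
  have hu0 : u ≠ 0 := by rintro rfl; simp [hQu] at hQ0
  suffices hvA : k ≠ 0 → v A / A ∈ O by
    rw [hQu, aux_logder v A u hA0 hu0, div_eq_mul_inv (v u)]
    refine add_mem ?_ (mul_mem (hvO _ hu) hu')
    by_cases hk : k = 0
    · simp [hk]
    · exact mul_mem (intCast_mem O k) (hvA hk)
  intro hk
  by_cases hb : ∃ m ∈ N, ∃ j : ℤ, j ≠ 0 ∧ ∃ t ∈ O, t⁻¹ ∈ O ∧ t ≠ 0 ∧ m = A ^ j * t
  · obtain ⟨m, hm, j, hj, t, ht, ht', ht0, hmt⟩ := hb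
    refine aux_ld1 O A hA0 hQO v hvO j hj t ht0 ht ht' ?_
    rw [← hmt, hvN m hm]; simp
  · have hNO : ∀ m ∈ N, m ∈ O := by
      intro m hm
      by_cases hm0 : m = 0
      · rw [hm0]; exact zero_mem _
      obtain ⟨j, t, ht, ht', hmt⟩ := hdec m (hNF hm) hm0
      have ht0 : t ≠ 0 := by rintro rfl; simp [hmt] at hm0
      have hj : j = 0 := by
        by_contra hj
        exact hb ⟨m, hm, j, hj, t, ht, ht', ht0, hmt⟩
      rw [hmt, hj]; simpa using ht
    have hlO : l ∈ O := auxR_le N x O hNO (fun i => hRO _ (auxR_x E x i)) hl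
    have hDA : D A / A ∈ O := by
      refine aux_ld1 O A hA0 hQO D hDO k hk u hu0 hu hu' ?_
      rw [← hQu, hQl, div_eq_mul_inv]
      exact mul_mem hlO hhi
    have hdvd : A ∣ ⟨h * D A, hDR A A.2⟩ := by
      apply auxO_dvd R A hA
      show h * D A / A ∈ O
      rw [mul_div_assoc]
      exact mul_mem (hRO _ hhR) hDA
    obtain ⟨α, hα⟩ := hdvd
    have hα' : D A / A = h⁻¹ * α := by
      have := congrArg Subtype.val hα
      push_cast at this
      field_simp
      linear_combination this
    have hδA : δ A / A ∈ O := by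
      by_contra hδA
      obtain ⟨s, hs⟩ := aux_R_span E x α.2
      have hδx : ∀ y ∈ auxK C x, δ y = 0 := fun y hy => by rw [hδ, hKD y hy, sub_self]
      have hspan := aux_span_stable E δ hδE _ (by
        rintro _ ⟨I, -, rfl⟩
        exact hδx _ (auxmon_K C x I)) α hs
      obtain ⟨m, ε, hε, ⟨k0, hk0, hεk⟩, hrel⟩ := aux_dep E _ ((s.finite_toSet).image _) (fun k => δ^[k+1] (α : F)) (fun k => hspan _)
      apply hεk
      refine aux_pole2 O (auxK E x) A hAO hA0 hAi hOF hdec hQO δ hδO hδA ε (fun k => ⟨hRO _ (auxR_L E x (hε k)), hRO _ (auxR_L E x (inv_mem (hε k)))⟩) m ?_ k0 hk0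
      apply hRO
      apply auxR_L E x
      show D _ = 0
      have hcδ : ∀ y, D (δ y) = δ (D y) := fun y => by simp [hδ, hcomm]
      rw [map_sum, ← mul_zero (h⁻¹), ← hrel, Finset.mul_sum]
      refine Finset.sum_congr rfl fun k _ => ?_
      rw [Derivation.leibniz, show D (ε k) = 0 from hε k, aux_iter_comm D δ hcδ, aux_comm_log D δ hcδ A, hα', ← Function.iterate_succ_apply δ k, 
        aux_iter_mul δ _ (hδx _ (inv_mem (auxR_le_K C x hh)))]
      simp only [smul_eq_mul]
      ring
    have : v A / A = D A / A + δ A / A := by rw [hδ]; ring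
    rw [this]
    exact add_mem hDA hδA

theorem aux_step2 {F : Type*} [Field F] [CharZero F] (D v : Derivation ℤ F F) (hcomm : ∀ y, D (v y) = v (D y))
    (C N : Subfield F) {n : ℕ} (x : Fin n → F) (hCD : ∀ c ∈ C, D c = 0) 
    (hKD : ∀ y ∈ auxK C x, v y = D y) (hvE : ∀ y ∈ auxker D, v y ∈ auxker D)
    (hNF : N ≤ auxK (auxker D) x) (hvN : ∀ m ∈ N, v m = 0)
    (hxE : AlgebraicIndependent (auxker D) x)
    (h : F) (hh : h ∈ auxR C x) (hh0 : h ≠ 0) (hhf : ∀ i, h * D (x i) ∈ auxR C x)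
    (hFv : ∀ y ∈ auxK (auxker D) x, v y ∈ auxK (auxker D) x)
    (Q l : F) (hQF : Q ∈ auxK (auxker D) x) (hQ0 : Q ≠ 0) (hl : l ∈ auxR N x) (hQl : D Q / Q = l / h) :
    ∃ c ∈ auxR C x, c ≠ 0 ∧ c * (v Q / Q) ∈ auxR (auxker D) x := by
  have hufd : UniqueFactorizationMonoid (auxR (auxker D) x) := aux_ufd _ x hxE
  obtain ⟨a, ha, b, hb, hb0, hab⟩ := auxK_frac (auxker D) x (div_mem (hFv Q hQF) hQF)
  let R := auxR (auxker D) x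
  obtain ⟨a', b', r, hrel, hra, hrb⟩ := UniqueFactorizationMonoid.exists_reduced_factors' (⟨a, ha⟩ : R) ⟨b, hb⟩ (fun H => hb0 (congrArg Subtype.val H))
  have hb'0 : b' ≠ 0 := by
    rintro rfl
    apply hb0
    rw [mul_zero] at hrb
    exact (congrArg Subtype.val hrb).symm
  have hr0 : r ≠ 0 := by
    rintro rfl
    apply hb0
    rw [zero_mul] at hrb
    exact (congrArg Subtype.val hrb).symm
  have hb'F : (b' : F) ≠ 0 := fun H => hb'0 (Subtype.ext H)
  have hrF : (r : F) ≠ 0 := fun H => hr0 (Subtype.ext H)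
  have hab' : v Q / Q = a' / b' := by
    have h1 : (r : F) * a' = a := congrArg Subtype.val hra
    have h2 : (r : F) * b' = b := congrArg Subtype.val hrb
    rw [hab, ← h1, ← h2]
    field_simp
  have hprime : ∀ A : R, Prime A → A ∣ b' → ∃ c : R, (c : F) ∈ auxR C x ∧ c ≠ 0 ∧ A ∣ c := by
    intro A hA hAb
    by_contra! hcon
    have h1 := aux_step2_prime D v hcomm C N x hCD hKD hvE hNF hvN hxE h hh hh0 hhf Q l hQF hQ0 hl hQl A hA hcon
    rw [hab'] at h1
    obtain ⟨e, he⟩ := hAb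
    have hA0 : (A : F) ≠ 0 := fun H => hA.ne_zero (Subtype.ext H)
    have he' : (b' : F) = A * e := congrArg Subtype.val he
    have he0 : (e : F) ≠ 0 := by
      intro H
      apply hb'F
      rw [he', H, mul_zero]
    have h2 : (a' : F) / A ∈ auxO R A hA := by
      have : (a' : F) / A = (a' / b') * e := by rw [he']; field_simp
      rw [this]
      exact mul_mem h1 (auxO_R R A hA e.2)
    have h3 := auxO_dvd R A hA h2
    exact hA.not_isUnit (hrel h3 ⟨e, he⟩)
  have hmain : ∀ b : R, b ≠ 0 → (∀ A : R, Prime A → A ∣ b → ∃ c : R, (c : F) ∈ auxR C x ∧ c ≠ 0 ∧ A ∣ c) → 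
      ∃ c : R, (c : F) ∈ auxR C x ∧ c ≠ 0 ∧ b ∣ c := by
    intro b
    induction b using UniqueFactorizationMonoid.induction_on_prime with
    | h₁ => intro h; exact absurd rfl h
    | h₂ y hy => intro _ _; exact ⟨1, one_mem _, one_ne_zero, hy.dvd⟩
    | h₃ y p hy hp ih => 
      intro _ hall
      obtain ⟨c, hc, hc0, hyc⟩ := ih hy (fun A hA hAy => hall A hA (hAy.mul_left p))
      obtain ⟨c', hc', hc0', hpc⟩ := hall p hp (dvd_mul_right p y)
      exact ⟨c' * c, mul_mem hc' hc, mul_ne_zero hc0' hc0, mul_dvd_mul hpc hyc⟩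
  obtain ⟨c, hc, hc0, e, he⟩ := hmain b' hb'0 hprime
  refine ⟨c, hc, fun H => hc0 (Subtype.ext H), ?_⟩
  have : (c : F) * (v Q / Q) = a' * e := by
    have he' : (c : F) = b' * e := congrArg Subtype.val he
    rw [hab', he']; field_simp
  rw [this]
  exact mul_mem a'.2 e.2


theorem aux_inj {F : Type*} [Field F] (v : Derivation ℤ F F) (M : Subfield F) (hvM : ∀ m ∈ M, v m = 0)
    (hM : ∀ y, v y = 0 → y ∈ M) {n : ℕ} (x : Fin n → F) (hxind : AlgebraicIndependent ↥M x)
    (s : Finset (Fin n →₀ ℕ)) (η : s → F) (h : ∀ i < s.card, ∑ I, v^[i] (η I) * auxmon x I = 0) : η = 0 := by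
  let V := Submodule.span M (Set.range η)
  have : Module.Finite M V := Module.Finite.span_of_finite M (Set.finite_range η)
  let B := Module.finBasis M V
  let r := Module.finrank M V
  have hr : r ≤ s.card := by
    have := finrank_range_le_card (R := M) η
    simpa [Set.finrank] using this
  let ζ : Fin r → F := fun l => (B l : F)
  have hζ : LinearIndependent M ζ := B.linearIndependent.map' V.subtype (by simp)
  have hη : ∀ I, η I ∈ V := fun I => Submodule.subset_span ⟨I, rfl⟩
  let c : s → Fin r → M := fun I l => B.repr ⟨η I, hη I⟩ l
  have hc : ∀ I, η I = ∑ l, (c I l : F) * ζ l := by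
    intro I
    have := congrArg Subtype.val (B.sum_repr ⟨η I, hη I⟩)
    rw [AddSubmonoidClass.coe_finsetSum] at this
    exact this.symm
  have hci : ∀ i I, v^[i] (η I) = ∑ l, (c I l : F) * v^[i] (ζ l) := by
    intro i I
    induction i with
    | zero => exact hc I
    | succ i ih =>
      rw [Function.iterate_succ_apply', ih, map_sum]
      refine Finset.sum_congr rfl fun l _ => ?_
      rw [Derivation.leibniz, hvM _ (c I l).2, Function.iterate_succ_apply']
      simp
  have h0 := aux_wr_top v M hM ζ hζ (fun l => ∑ I, (c I l : F) * auxmon x I) (by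
    intro i hi
    rw [Fintype.card_fin] at hi
    rw [← h i (by omega)]
    simp only [hci, Finset.sum_mul]
    rw [Finset.sum_comm]
    exact Finset.sum_congr rfl fun l _ => Finset.sum_congr rfl fun I _ => by ring)
  have hc0 : ∀ I l, c I l = 0 := by
    intro I l
    exact Fintype.linearIndependent_iff.1 (aux_mon_li M x hxind s) (fun I => c I l) (congrFun h0 l) I
  funext I
  rw [hc I]
  simp [hc0]

theorem aux_fg {F : Type*} [Field F] (v : Derivation ℤ F F) (M : Subfield F) (hvM : ∀ m ∈ M, v m = 0)
    (hM : ∀ y, v y = 0 → y ∈ M) {n : ℕ} (x : Fin n → F) (hxind : AlgebraicIndependent ↥M x)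
    (s : Finset (Fin n →₀ ℕ)) (ε : s → F) (U : Submodule M F) (hU : U.FG) 
    (hεU : ∀ i, ∑ I, v^[i] (ε I) * auxmon x I ∈ U) : 
    (Submodule.span M (Set.range (fun t : ℕ × s => v^[t.1] (ε t.2)))).FG := by
  let vl : F →ₗ[M] F := 
    { toFun := v
      map_add' := map_add v
      map_smul' := by
        intro m y
        simp only [Subfield.smul_def, smul_eq_mul, Derivation.leibniz, hvM m m.2, RingHom.id_apply]
        ring }
  have hvl : ∀ i y, (vl ^ i) y = v^[i] y := by
    intro i y
    rw [Module.End.pow_apply]; rfl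
  let Φ : (s → F) →ₗ[M] (Fin s.card → F) := LinearMap.pi fun i => ∑ I : s, (LinearMap.mulRight M (auxmon x I)).comp ((vl ^ (i : ℕ)).comp (LinearMap.proj I))
  have hΦ : ∀ η i, Φ η i = ∑ I, v^[(i : ℕ)] (η I) * auxmon x I := by
    intro η i
    simp [Φ, hvl]
  let S : Submodule M (s → F) := Submodule.span M (Set.range fun j : ℕ => fun I => v^[j] (ε I))
  have hinj : Function.Injective Φ := by
    rw [← LinearMap.ker_eq_bot, LinearMap.ker_eq_bot']
    intro η hη
    apply aux_inj v M hvM hM x hxind s η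
    intro i hi
    have := congrFun hη ⟨i, hi⟩
    rw [hΦ] at this
    exact this
  have hUf : Module.Finite M U := Module.Finite.iff_fg.2 hU
  have hS : S.FG := by
    have h1 : (S.map Φ) ≤ Submodule.pi Set.univ (fun _ : Fin s.card => U) := by
      rw [Submodule.map_le_iff_le_comap, Submodule.span_le]
      rintro _ ⟨j, rfl⟩
      rw [SetLike.mem_coe, Submodule.mem_comap]
      rw [Submodule.mem_pi]
      intro i _
      rw [hΦ]
      have := hεU (i + j)
      simpa only [Function.iterate_add_apply] using this
    have h2 : (Submodule.pi Set.univ (fun _ : Fin s.card => U)).FG := Submodule.fg_pi (fun _ => hU)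
    have h3 : (S.map Φ).FG := by
      have : Module.Finite M (Submodule.pi Set.univ (fun _ : Fin s.card => U)) := Module.Finite.iff_fg.2 h2
      have : IsNoetherian M (Submodule.pi Set.univ (fun _ : Fin s.card => U)) := inferInstance
      exact Submodule.FG.of_le h2 h1
    exact Submodule.fg_of_fg_map_injective Φ hinj h3
  have : Submodule.span M (Set.range (fun t : ℕ × s => v^[t.1] (ε t.2))) = ⨆ I : s, S.map (LinearMap.proj I) := by
    apply le_antisymm
    · rw [Submodule.span_le]
      rintro _ ⟨⟨j, I⟩, rfl⟩
      apply Submodule.mem_iSup_of_mem I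
      exact ⟨fun I => v^[j] (ε I), Submodule.subset_span ⟨j, rfl⟩, rfl⟩
    · apply iSup_le
      intro I
      rw [Submodule.map_le_iff_le_comap, Submodule.span_le]
      rintro _ ⟨j, rfl⟩
      exact Submodule.subset_span ⟨(j, I), rfl⟩
  rw [this]
  exact Submodule.fg_iSup _ (fun I => hS.map _)


theorem aux_caseA {F : Type*} [Field F] (v δ : Derivation ℤ F F) (M : Subfield F) (hvM : ∀ m ∈ M, v m = 0)
    (hδM : ∀ m ∈ M, δ m ∈ M) (hcomm : ∀ y, v (δ y) = δ (v y)) (μ : F) (hμ : δ μ ∈ M) {ι : Type*} (G : ι → F)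
    (hG : ∀ i, v (G i) = μ * G i + δ (G i)) : 
    ∀ y ∈ Submodule.span M (Set.range (fun t : ℕ × ι => δ^[t.1] (G t.2))), 
      v y - μ * y ∈ Submodule.span M (Set.range (fun t : ℕ × ι => δ^[t.1] (G t.2))) := by
  set W := Submodule.span M (Set.range (fun t : ℕ × ι => δ^[t.1] (G t.2))) with hW
  have hgen : ∀ j i, δ^[j] (G i) ∈ W := fun j i => Submodule.subset_span ⟨(j, i), rfl⟩
  have hδW : ∀ y ∈ W, δ y ∈ W := by
    intro y hy
    induction hy using Submodule.span_induction with
    | mem y hy => 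
      obtain ⟨⟨j, i⟩, rfl⟩ := hy
      have := hgen (j+1) i
      rwa [Function.iterate_succ_apply'] at this
    | zero => simp
    | add a b _ _ h1 h2 => rw [map_add]; exact add_mem h1 h2
    | smul m a ha h1 =>
      rw [Subfield.smul_def, smul_eq_mul, Derivation.leibniz]
      exact add_mem (Submodule.smul_mem _ m h1) (by
        rw [smul_eq_mul, mul_comm]
        exact Submodule.smul_mem _ (⟨δ m, hδM _ m.2⟩ : M) ha)
  have hbase : ∀ j i, v (δ^[j] (G i)) - μ * δ^[j] (G i) ∈ W := by
    intro j i
    induction j with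
    | zero => 
      rw [Function.iterate_zero_apply, hG, add_sub_cancel_left]
      exact hgen 1 i
    | succ j ih =>
      rw [Function.iterate_succ_apply', hcomm]
      have h1 := hδW _ ih
      have h2 : δ μ * δ^[j] (G i) ∈ W := Submodule.smul_mem _ (⟨δ μ, hμ⟩ : M) (hgen j i)
      have : δ (v (δ^[j] (G i))) - μ * δ (δ^[j] (G i)) = δ (v (δ^[j] (G i)) - μ * δ^[j] (G i)) + δ μ * δ^[j] (G i) := by
        rw [map_sub, Derivation.leibniz]
        simp only [smul_eq_mul]
        ring
      rw [this]
      exact add_mem h1 h2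
  intro y hy
  induction hy using Submodule.span_induction with
  | mem y hy => 
    obtain ⟨⟨j, i⟩, rfl⟩ := hy
    exact hbase j i
  | zero => simp
  | add a b _ _ h1 h2 => 
    rw [map_add, show v a + v b - μ * (a + b) = (v a - μ * a) + (v b - μ * b) by ring]; exact add_mem h1 h2
  | smul m a ha h1 =>
    have : v (m • a) - μ * (m • a) = m • (v a - μ * a) := by
      simp only [Subfield.smul_def, smul_eq_mul, Derivation.leibniz, hvM m m.2]
      ring
    rw [this]
    exact Submodule.smul_mem _ m h1

theorem aux_main {F : Type*} [Field F] [CharZero F] (D : Derivation ℤ F F)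
    (C M : Subfield F) (hCM : C ≤ M) (hCalg : IsAlgClosed ↥C)
    (hC : ∀ c ∈ C, D c = 0) (hMdiff : ∀ x ∈ M, D x ∈ M)
    (n : ℕ) (x : Fin n → F) (hxind : AlgebraicIndependent ↥M x)
    (hgen : auxK M x = (⊤ : Subfield F))
    (hf : ∀ i, D (x i) ∈ auxK C x)
    (w : F) (hw : D w = 0) (hwM : w ∉ M) :
    ∃ z ∈ auxK C x, z ∉ C ∧ (D z = 0 ∨ D z = 1 ∨ ∃ c ∈ C, c ≠ 0 ∧ D z = c * z) := by
  classical
  obtain ⟨v, hvM, hvx⟩ := aux_exists_v M x hxind hgen (fun i => D (x i))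
  -- `δ = v - D` kills `K`
  let δ : Derivation ℤ F F := v - D
  have hδ : ∀ y, δ y = v y - D y := fun y => rfl
  have hδK : ∀ y ∈ auxK C x, δ y = 0 := by
    intro y hy
    have : auxK C x ≤ auxker δ := auxK_le C x _ (fun c hc => by
      show δ c = 0
      rw [hδ, hC c hc, hvM c (hCM hc), sub_zero]) (fun i => by
      show δ (x i) = 0
      rw [hδ, hvx, sub_self])
    exact this hy
  have hKD : ∀ y ∈ auxK C x, v y = D y := fun y hy => sub_eq_zero.1 (hδK y hy)
  have hcomm : ∀ y, D (v y) = v (D y) := by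
    intro y
    let B : Derivation ℤ F F := ⁅D, v⁆
    have hB : ∀ y, B y = D (v y) - v (D y) := fun y => Derivation.commutator_apply ..
    have : auxK M x ≤ auxker B := auxK_le M x _ (fun m hm => by
      show B m = 0
      rw [hB, hvM m hm, hvM _ (hMdiff m hm)]; simp) (fun i => by
      show B (x i) = 0
      rw [hB, hvx, hKD _ (hf i), sub_self])
    rw [hgen] at this
    have h1 : B y = 0 := this (show y ∈ (⊤ : Subfield F) from trivial)
    rw [hB] at h1
    exact sub_eq_zero.1 h1
  have SPEC := aux_spec D v C M hCM hCalg hC x hxind hgen hf hvM hvx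
  by_cases hM : ∀ y, v y = 0 → y ∈ M
  swap
  · push Not at hM
    obtain ⟨y, hy, hyM⟩ := hM
    refine SPEC (Submodule.span M {1, y}) ⟨{1, y}, by simp⟩ 0 ?_ 1 y (Submodule.subset_span (by simp)) (Submodule.subset_span (by simp)) one_ne_zero ?_
    · intro z hz
      obtain ⟨a, b, rfl⟩ := Submodule.mem_span_pair.1 hz
      have : v (a • 1 + b • y) - 0 * (a • 1 + b • y) = 0 := by
        simp only [Subfield.smul_def, smul_eq_mul, map_add, Derivation.leibniz, hvM a a.2, hvM b b.2, hy]
        simp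
      rw [this]; exact zero_mem _
    · intro m hm h
      apply hyM
      rw [h, mul_one]; exact hm
  -- from now on the constants of `v` are `M`
  have hKv : ∀ y ∈ auxK C x, v y ∈ auxK C x := fun y hy => 
    aux_der_K C x v (fun c hc => by rw [hvM c (hCM hc)]; exact zero_mem _) (fun i => by rw [hvx]; exact hf i) hy
  have hxE : AlgebraicIndependent (auxker D) x := aux_U1 D v M (auxK C x) x hxind (auxmon_K C x) hKv hKD hM
  have hCE : C ≤ auxker D := fun c hc => hC c hc
  have hvE : ∀ y ∈ auxker D, v y ∈ auxker D := by
    intro y hy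
    show D (v y) = 0
    rw [hcomm, show D y = 0 from hy, map_zero]
  let F0 := auxK (auxker D) x
  have hF0v : ∀ y ∈ F0, v y ∈ F0 := fun y hy => 
    aux_der_K _ x v hvE (fun i => by rw [hvx]; exact auxK_mono x hCE (hf i)) hy
  have hF0D : ∀ y ∈ F0, D y ∈ F0 := fun y hy => 
    aux_der_K _ x D (fun y hy => by rw [show D y = 0 from hy]; exact zero_mem _) (fun i => auxK_mono x hCE (hf i)) hy
  let N := M ⊓ F0
  have hNM : N ≤ M := inf_le_left
  have hNF : N ≤ F0 := inf_le_right
  have hCN : C ≤ N := le_inf hCM (fun c hc => auxK_L _ x (hCE hc))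
  have hND : ∀ y ∈ N, D y ∈ N := fun y hy => ⟨hMdiff y hy.1, hF0D y hy.2⟩
  have hNv : ∀ y ∈ N, v y ∈ N := fun y hy => by rw [hvM y hy.1]; exact zero_mem _
  have hxN : AlgebraicIndependent N x := by
    rw [aux_indep_iff]
    intro s c hc
    exact (aux_indep_iff M x).1 hxind s c (fun I => hNM (hc I))
  have hufd : UniqueFactorizationMonoid (auxR N x) := aux_ufd N x hxN
  obtain ⟨h, hh, hh0, hhf⟩ := aux_common C x (fun i => D (x i)) hf
  have hhN : h ∈ auxR N x := auxR_mono x hCN hh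
  have hDRN : ∀ y ∈ auxR N x, h * D y ∈ auxR N x := fun y hy => 
    aux_der_R N x D hND h hhN (fun i => auxR_mono x hCN (hhf i)) hy
  have hvRN : ∀ y ∈ auxR N x, h * v y ∈ auxR N x := fun y hy => 
    aux_der_R N x v hNv h hhN (fun i => by rw [hvx]; exact auxR_mono x hCN (hhf i)) hy
  have hw0 : w ≠ 0 := by rintro rfl; exact hwM (zero_mem _)
  -- Step 1
  obtain ⟨P, Q, l, hQ0, hwPQ, hlP, hlQ⟩ : ∃ P Q l : auxR N x, (Q : F) ≠ 0 ∧ w = P / Q ∧ h * D P = l * P ∧ h * D Q = l * Q := by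
    obtain ⟨P, hP, Q, hQ, hQ0, hPQ⟩ := aux_U2 v M F0 x hxind hgen (auxmon_K _ x) hvM hF0v hM w (auxK_L _ x hw)
    obtain ⟨P', Q', r, hrel, hrP, hrQ⟩ := UniqueFactorizationMonoid.exists_reduced_factors' (⟨P, hP⟩ : auxR N x) ⟨Q, hQ⟩ (fun H => hQ0 (congrArg Subtype.val H))
    have h1 : (r : F) * P' = P := congrArg Subtype.val hrP
    have h2 : (r : F) * Q' = Q := congrArg Subtype.val hrQ
    have hr0 : (r : F) ≠ 0 := by intro H; apply hQ0; rw [← h2, H, zero_mul]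
    have hQ'0 : (Q' : F) ≠ 0 := by intro H; apply hQ0; rw [← h2, H, mul_zero]
    have hw' : w = P' / Q' := by
      rw [hPQ, ← h1, ← h2]; field_simp
    have hder : Q' * D P' = P' * D Q' := by
      rw [hw', Derivation.leibniz_div] at hw
      simp only [smul_eq_mul] at hw
      have := (mul_eq_zero.1 hw).resolve_left (by simp [hQ'0])
      exact sub_eq_zero.1 this
    have hrel' : Q' * ⟨h * D P', hDRN _ P'.2⟩ = P' * ⟨h * D Q', hDRN _ Q'.2⟩ := by
      apply Subtype.ext
      push_cast
      linear_combination h * hder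
    have hdvd : Q' ∣ (⟨h * D Q', hDRN _ Q'.2⟩ : auxR N x) := hrel.symm.dvd_of_dvd_mul_left ⟨_, hrel'.symm⟩
    obtain ⟨l, hl⟩ := hdvd
    have hl' : h * D Q' = Q' * l := congrArg Subtype.val hl
    refine ⟨P', Q', l, hQ'0, hw', ?_, ?_⟩
    · apply mul_left_cancel₀ hQ'0
      linear_combination h * hder + P' * hl'
    · rw [hl']; ring
  have hP0 : (P : F) ≠ 0 := by
    intro H; apply hw0; rw [hwPQ, H, zero_div]
  have hRNF : ∀ y ∈ auxR N x, y ∈ F0 := fun y hy => 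
    auxR_le N x F0.toSubring hNF (auxK_x _ x) hy
  set μ : F := l / h with hμ
  have hDQ : D Q = μ * Q := by rw [hμ]; field_simp; linear_combination hlQ
  have hDP : D P = μ * P := by rw [hμ]; field_simp; linear_combination hlP
  have hQl : D Q / Q = l / h := by rw [hDQ, mul_div_cancel_right₀ _ hQ0]
  -- Step 2
  obtain ⟨c, hc, hc0, hce⟩ := aux_step2 D v hcomm C N x hC hKD hvE hNF (fun m hm => hvM m hm.1) hxE h hh hh0 hhf hF0v Q l
    (hRNF _ Q.2) hQ0 l.2 hQl
  -- Step 3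
  have hτ : D (v Q / Q) = v μ := by rw [aux_comm_log D v hcomm, hQl]
  let σ : F := h ^ 3 * c ^ 2 * v μ
  have hσN : σ ∈ auxR N x := by
    have : σ = c ^ 2 * (h * (h * v l) - l * (h * v h)) := by
      simp only [σ, hμ]
      rw [Derivation.leibniz_div]
      simp only [smul_eq_mul]
      field_simp
    rw [this]
    exact mul_mem (pow_mem (auxR_mono x hCN hc) _) (sub_mem (mul_mem hhN (hvRN _ l.2)) (mul_mem l.2 (hvRN _ hhN)))
  have hhE : h ∈ auxR (auxker D) x := auxR_mono x hCE hh
  have hcE : c ∈ auxR (auxker D) x := auxR_mono x hCE hc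
  have hDRE : ∀ y ∈ auxR (auxker D) x, h * D y ∈ auxR (auxker D) x := fun y hy => 
    aux_der_R _ x D (fun y hy => by rw [show D y = 0 from hy]; exact zero_mem _) h hhE (fun i => auxR_mono x hCE (hhf i)) hy
  have hσE : σ ∈ auxR (auxker D) x := by
    set e := c * (v Q / Q) with he
    have h1 : v Q / Q = e / c := by rw [he]; field_simp
    have : σ = h ^ 2 * (c * (h * D e) - e * (h * D c)) := by
      simp only [σ, ← hτ]
      rw [h1, Derivation.leibniz_div]
      simp only [smul_eq_mul]
      field_simp
    rw [this]
    exact mul_mem (pow_mem hhE _) (sub_mem (mul_mem hcE (hDRE _ hce)) (mul_mem hce (hDRE _ hcE)))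
  have hδM : ∀ m ∈ M, δ m ∈ M := fun m hm => by
    rw [hδ, hvM m hm, zero_sub]; exact neg_mem (hMdiff m hm)
  have hvδ : ∀ y, v (δ y) = δ (v y) := fun y => by simp [hδ, hcomm]
  have hmonδ : ∀ I, δ (auxmon x I) = 0 := fun I => hδK _ (auxmon_K C x I)
  by_cases hσ : δ σ = 0
  · have hδμ : δ μ ∈ M := by
      apply hM
      rw [hvδ]
      have h1 : δ (h ^ 3 * c ^ 2) = 0 := hδK _ (auxR_le_K C x (mul_mem (pow_mem hh _) (pow_mem hc _)))
      have h2 : δ σ = h ^ 3 * c ^ 2 * δ (v μ) := by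
        simp only [σ]
        rw [Derivation.leibniz, h1]; simp
      rw [h2] at hσ
      exact (mul_eq_zero.1 hσ).resolve_left (mul_ne_zero (pow_ne_zero _ hh0) (pow_ne_zero _ hc0))
    let G : Fin 2 → F := ![P, Q]
    have hG : ∀ i, v (G i) = μ * G i + δ (G i) := by
      intro i
      fin_cases i
      · show v P = μ * P + δ P
        rw [hδ, hDP]; ring
      · show v Q = μ * Q + δ Q
        rw [hδ, hDQ]; ring
    have hGR : ∀ i, G i ∈ auxR M x := by
      intro i
      fin_cases i
      · exact auxR_mono x hNM P.2
      · exact auxR_mono x hNM Q.2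
    choose s hs using fun i => aux_R_span M x (hGR i)
    refine SPEC (Submodule.span M (Set.range (fun t : ℕ × Fin 2 => δ^[t.1] (G t.2)))) ?_ μ 
      (aux_caseA v δ M hvM hδM hvδ μ hδμ G hG) Q P (Submodule.subset_span ⟨(0, 1), rfl⟩) (Submodule.subset_span ⟨(0, 0), rfl⟩) hQ0 ?_
    · refine Submodule.FG.of_le (T := ⨆ i, Submodule.span M (auxmon x '' (s i : Set (Fin n →₀ ℕ)))) (Submodule.fg_iSup _ fun i => Submodule.fg_span ((s i).finite_toSet.image _)) ?_
      rw [Submodule.span_le]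
      rintro _ ⟨⟨j, i⟩, rfl⟩
      apply Submodule.mem_iSup_of_mem i
      exact aux_span_stable M δ hδM _ (by rintro _ ⟨I, -, rfl⟩; exact hmonδ I) _ (hs i) j
    · intro m hm H
      apply hwM
      rw [hwPQ, H, mul_div_cancel_right₀ _ hQ0]
      exact hm
  · obtain ⟨s, ε, hε, hσs⟩ := auxR_exp _ x hσE
    obtain ⟨s', hs'⟩ := aux_R_span M x (auxR_mono x hNM hσN)
    have hεi : ∀ j I, v^[j] (ε I) ∈ auxker D := fun j I => aux_iter_mem v _ hvE j (hε I)
    have hδj : ∀ j, ∑ I : s, v^[j] (ε I) * auxmon x I = δ^[j] σ := by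
      intro j
      induction j with
      | zero => 
        rw [Function.iterate_zero_apply, hσs]
        exact Finset.sum_coe_sort s (fun I => ε I * auxmon x I)
      | succ j ih =>
        rw [Function.iterate_succ_apply', ← ih, map_sum]
        refine Finset.sum_congr rfl fun I _ => ?_
        rw [Derivation.leibniz, hmonδ, hδ, show D _ = 0 from hεi j I, Function.iterate_succ_apply']
        simp only [smul_eq_mul]
        ring
    have hfg := aux_fg v M hvM hM x hxind s (fun I => ε I) (Submodule.span M (auxmon x '' (s' : Set (Fin n →₀ ℕ)))) 
      (Submodule.fg_span (s'.finite_toSet.image _)) (by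
        intro j
        rw [hδj]
        exact aux_span_stable M δ hδM _ (by rintro _ ⟨I, -, rfl⟩; exact hmonδ I) _ hs' j)
    obtain ⟨I, hI⟩ : ∃ I : s, v (ε I) ≠ 0 := by
      by_contra! hall
      apply hσ
      have := hδj 1
      simp only [Function.iterate_one, hall, zero_mul, Finset.sum_const_zero] at this
      exact this.symm
    set W0 := Submodule.span M (Set.range (fun t : ℕ × s => v^[t.1] (ε t.2))) with hW0
    have hvW0 : ∀ y ∈ W0, v y ∈ W0 := by
      intro y hy
      induction hy using Submodule.span_induction with
      | mem y hy =>
        obtain ⟨⟨j, I⟩, rfl⟩ := hy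
        exact Submodule.subset_span ⟨(j+1, I), Function.iterate_succ_apply' ..⟩
      | zero => simp
      | add a b _ _ h1 h2 => rw [map_add]; exact add_mem h1 h2
      | smul m a ha h1 =>
        rw [Subfield.smul_def, smul_eq_mul, Derivation.leibniz, hvM m m.2, smul_zero, add_zero]
        exact Submodule.smul_mem _ m h1
    refine SPEC (Submodule.span M {1} ⊔ W0) ((Submodule.fg_span_singleton _).sup hfg) 0 ?_ 1 (ε I) 
      (Submodule.mem_sup_left (Submodule.mem_span_singleton_self _)) (Submodule.mem_sup_right (Submodule.subset_span ⟨(0, I), rfl⟩)) one_ne_zero ?_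
    · intro y hy
      obtain ⟨a, ha, b, hb, rfl⟩ := Submodule.mem_sup.1 hy
      obtain ⟨m, rfl⟩ := Submodule.mem_span_singleton.1 ha
      rw [zero_mul, sub_zero, map_add]
      have : v (m • (1 : F)) = 0 := by
        rw [Subfield.smul_def, smul_eq_mul, mul_one, hvM m m.2]
      rw [this, zero_add]
      exact Submodule.mem_sup_right (hvW0 b hb)
    · intro m hm H
      apply hI
      rw [H, mul_one, hvM m hm]

/-- Let `M` be a differential field extension of an algebraically closed
field of constants `C`, and `F = M(x₁,…,xₙ)` with `xᵢ' = fᵢ ∈ C(x₁,…,xₙ)`. If `F` contains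
a constant not in `M`, then there is `z ∈ C(x₁,…,xₙ) \ C` with `z' = 0`, `z' = 1`, or
`z' = c·z` for some nonzero `c ∈ C`. -/
theorem stmt12 {F : Type u} [Field F] [CharZero F] (D : Derivation ℤ F F)
    (C M : Subfield F) (hCM : C ≤ M)
    (hCalg : IsAlgClosed ↥C)
    (hCconst : ∀ c ∈ C, D c = 0)
    (hMdiff : ∀ x ∈ M, D x ∈ M)
    (n : ℕ) (x : Fin n → F)
    (hxind : AlgebraicIndependent ↥M x)
    (hgen : Subfield.closure (↑M ∪ Set.range x) = (⊤ : Subfield F))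
    (hf : ∀ i, D (x i) ∈ Subfield.closure (↑C ∪ Set.range x))
    (hnewconst : ∃ w : F, D w = 0 ∧ w ∉ M) :
    ∃ z ∈ Subfield.closure (↑C ∪ Set.range x), z ∉ C ∧
      (D z = 0 ∨ D z = 1 ∨ ∃ c ∈ C, c ≠ 0 ∧ D z = c * z) := by
  obtain ⟨w, hw, hwM⟩ := hnewconst
  exact aux_main D C M hCM hCalg hCconst hMdiff n x hxind hgen hf w hw hwM
end

section
/- Let C be an algebraically closed field of characteristic zero and let h be a nonzero element of the rational function field C(x₁). Equip the rational function field F = C(x₁,x₂) in two variables with the unique derivation D satisfying D(c) = 0 for all c ∈ C, D(x₁) = x₂, and D(x₂) = x₂·h(x₁). Then F contains a constant of D not lying in C if and only if there exists g ∈ C(x₁) with h = ∂g/∂x₁ (the derivative of the rational function g with respect to x₁). -/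
universe u

open Polynomial in
lemma exists_polyDeriv {k E : Type*} [Field k] [Field E] [Algebra k E]
    (d : k → k) (hd0 : d 0 = 0) (hdadd : ∀ a b, d (a + b) = d a + d b)
    (δ : Derivation ℤ E E)
    (hcomp : ∀ a : k, δ (algebraMap k E a) = algebraMap k E (d a))
    (t : E) (h : k) (ht : δ t = algebraMap k E h) (p : k[X]) :
    ∃ q : k[X], aeval t q = δ (aeval t p) ∧
      ∀ n, q.coeff n = d (p.coeff n) + h * ((n + 1 : ℕ) * p.coeff (n + 1)) := by
  induction p using Polynomial.induction_on' with
  | add p q hp hq =>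
    obtain ⟨p', hp1, hp2⟩ := hp
    obtain ⟨q', hq1, hq2⟩ := hq
    refine ⟨p' + q', by simp [hp1, hq1], fun n => ?_⟩
    simp only [coeff_add, hp2, hq2, hdadd]
    ring
  | monomial m a =>
    refine ⟨monomial m (d a) + C h * derivative (monomial m a), ?_, fun n => ?_⟩
    · simp only [map_add, map_mul, aeval_monomial, aeval_C, derivative_monomial,
        Derivation.leibniz, Derivation.leibniz_pow, hcomp, ht, smul_eq_mul, nsmul_eq_mul, map_natCast]
      ring
    · rw [coeff_add, coeff_C_mul, coeff_derivative, coeff_monomial, coeff_monomial, coeff_monomial]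
      by_cases h1 : m = n
      · simp [h1]
      · simp only [h1, if_false, hd0]
        push_cast; ring

open Polynomial in
lemma const_or_integral {k E : Type*} [Field k] [CharZero k] [Field E] [Algebra k E]
    (d : k → k) (hdadd : ∀ a b, d (a + b) = d a + d b)
    (hdmul : ∀ a b, d (a * b) = a * d b + b * d a)
    (δ : Derivation ℤ E E)
    (hcomp : ∀ a : k, δ (algebraMap k E a) = algebraMap k E (d a))
    (t : E) (h : k) (ht : δ t = algebraMap k E h) (htr : Transcendental k t)
    (hno : ∀ g, d g ≠ h) (z : E) (hz : z ∈ IntermediateField.adjoin k {t}) (hδ : δ z = 0) :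
    z ∈ Set.range (algebraMap k E) := by
  have hd0 : d 0 = 0 := by simpa using hdadd 0 0
  have hd1 : d 1 = 0 := by simpa using hdmul 1 1
  have hdn : ∀ n : ℕ, d n = 0 := by
    intro n
    induction n with
    | zero => simpa using hd0
    | succ n ih => push_cast; rw [hdadd, ih, hd1, add_zero]
  have inj := transcendental_iff_injective.mp htr
  have key := exists_polyDeriv d hd0 hdadd δ hcomp t h ht
  -- polynomials with zero derivative
  have hA : ∀ p : k[X], δ (aeval t p) = 0 → p.natDegree = 0 := by
    intro p hp
    obtain ⟨q, hq1, hq2⟩ := key p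
    have hq0 : q = 0 := inj (by rw [hq1, hp, map_zero])
    subst hq0
    by_contra hn
    obtain ⟨m, hm⟩ := Nat.exists_eq_succ_of_ne_zero hn
    have e1 := hq2 (m + 1)
    have e0 := hq2 m
    have hz2 : p.coeff (m + 1 + 1) = 0 := coeff_eq_zero_of_natDegree_lt (by omega)
    have hlc : p.coeff (m + 1) ≠ 0 := by
      have : p.leadingCoeff ≠ 0 := by
        rw [Ne, leadingCoeff_eq_zero]; rintro rfl; simp at hn
      rwa [leadingCoeff, hm] at this
    rw [hz2, coeff_zero, mul_zero, mul_zero, add_zero] at e1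
    rw [coeff_zero] at e0
    set a := p.coeff (m + 1)
    set b := p.coeff m
    set N : k := ((m + 1 : ℕ) : k)
    have hN : N ≠ 0 := Nat.cast_ne_zero.mpr (by omega)
    have hNa : N * a ≠ 0 := mul_ne_zero hN hlc
    have hdNa : d (N * a) = 0 := by rw [hdmul, ← e1, hdn]; ring
    apply hno (-b / (N * a))
    have h2 := hdmul (N * a) (-b / (N * a))
    rw [mul_div_cancel₀ _ hNa, hdNa, mul_zero, add_zero] at h2
    have h3 := hdadd b (-b)
    rw [add_neg_cancel, hd0] at h3
    apply mul_left_cancel₀ hNa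
    rw [← h2]
    linear_combination e0 - h3
  obtain ⟨r, s, hrs⟩ := (IntermediateField.mem_adjoin_simple_iff k z).mp hz
  by_cases hs : s = 0
  · exact ⟨0, by simp [hrs, hs]⟩
  obtain ⟨p, q, hpq, hq, hzq⟩ : ∃ p q : k[X], IsCoprime p q ∧ q.Monic ∧
      z * aeval t q = aeval t p := by
    classical
    let _ : GCDMonoid k[X] := EuclideanDomain.gcdMonoid k[X]
    have hg : gcd r s ≠ 0 := gcd_ne_zero_of_right hs
    obtain ⟨p, hp⟩ := gcd_dvd_left r s
    obtain ⟨q, hq⟩ := gcd_dvd_right r s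
    have hq0 : q ≠ 0 := by rintro rfl; exact hs (by rw [hq, mul_zero])
    have hcop : IsCoprime p q :=
      (gcd_isUnit_iff _ _).1 (isUnit_gcd_of_eq_mul_gcd hp hq hg)
    have hl : q.leadingCoeff⁻¹ ≠ 0 := inv_ne_zero (leadingCoeff_ne_zero.mpr hq0)
    have hu : IsUnit (C q.leadingCoeff⁻¹) := isUnit_C.mpr hl.isUnit
    refine ⟨p * C q.leadingCoeff⁻¹, q * C q.leadingCoeff⁻¹, ?_,
      monic_mul_leadingCoeff_inv hq0, ?_⟩
    · exact (isCoprime_mul_unit_right hu p q).mpr hcop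
    · have i0 : ∀ f : k[X], f ≠ 0 → aeval t f ≠ 0 := fun f hf h0 =>
        hf (inj (by rw [h0, map_zero]))
      have a1 := i0 _ hg
      have a2 := i0 _ hq0
      have er : aeval t r = aeval t (gcd r s) * aeval t p := by rw [← map_mul, ← hp]
      have es : aeval t s = aeval t (gcd r s) * aeval t q := by rw [← map_mul, ← hq]
      rw [hrs, er, es, map_mul, map_mul]
      field_simp
  obtain ⟨p', hp1, hp2⟩ := key p
  obtain ⟨q', hq1, hq2⟩ := key q
  have hδ2 : z * δ (aeval t q) = δ (aeval t p) := by
    rw [← hzq, Derivation.leibniz, hδ]; simp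
  have heq : p * q' = p' * q := by
    apply inj
    rw [map_mul, map_mul, hp1, hq1, ← hδ2, ← hzq]; ring
  have hdvd : q ∣ q' := hpq.symm.dvd_of_dvd_mul_left ⟨p', by rw [heq, mul_comm]⟩
  have hq'0 : q' = 0 := by
    apply eq_zero_of_dvd_of_degree_lt hdvd
    rw [degree_eq_natDegree hq.ne_zero, degree_lt_iff_coeff_zero]
    intro m hm
    have h1 : q.coeff (m + 1) = 0 := coeff_eq_zero_of_natDegree_lt (by omega)
    rw [hq2, h1, mul_zero, mul_zero, add_zero]
    rcases hm.eq_or_lt with rfl | hm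
    · rw [hq.coeff_natDegree, hd1]
    · rw [coeff_eq_zero_of_natDegree_lt hm, hd0]
  have hpd : q.natDegree = 0 := hA q (by rw [← hq1, hq'0, map_zero])
  have hpp : p.natDegree = 0 := hA p (by rw [← hδ2, ← hq1, hq'0, map_zero, mul_zero])
  have hq11 : q = 1 := hq.natDegree_eq_zero.mp hpd
  rw [hq11, map_one, mul_one] at hzq
  refine ⟨p.coeff 0, ?_⟩
  rw [hzq, eq_C_of_natDegree_eq_zero hpp]; simp

/-- Let `F = C(x₁,x₂)` with derivation determined by `D x₁ = x₂` and
`D x₂ = x₂·h(x₁)`, where `h ∈ C(x₁)` is nonzero. Then `F` has a constant not in `C` iff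
`h = ∂g/∂x₁` for some `g ∈ C(x₁)`. (Since `D` restricted to `C(x₁)` satisfies
`D g = (∂g/∂x₁)·D x₁ = (∂g/∂x₁)·x₂`, the condition `h = ∂g/∂x₁` is expressed as
`D g = x₂ * h`.) -/
theorem stmt13 {F : Type u} [Field F] [CharZero F] (D : Derivation ℤ F F)
    (C : Subfield F) (hCalg : IsAlgClosed ↥C)
    (x₁ x₂ : F)
    (hind : AlgebraicIndependent ↥C ![x₁, x₂])
    (hgen : Subfield.closure (↑C ∪ {x₁, x₂}) = (⊤ : Subfield F))
    (hCconst : ∀ c ∈ C, D c = 0)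
    (h : F) (hh : h ∈ Subfield.closure (↑C ∪ {x₁})) (hh0 : h ≠ 0)
    (hx1 : D x₁ = x₂) (hx2 : D x₂ = x₂ * h) :
    (∃ z : F, D z = 0 ∧ z ∉ C) ↔
      ∃ g ∈ Subfield.closure (↑C ∪ {x₁}), D g = x₂ * h := by
  classical
  set δ : Derivation ℤ F F := x₂⁻¹ • D with hδdef
  have hδ : ∀ z, δ z = x₂⁻¹ * D z := fun z => rfl
  have hcl : ∀ S : Set F, ∀ z, z ∈ IntermediateField.adjoin ↥C S ↔
      z ∈ Subfield.closure (↑C ∪ S) := by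
    intro S z
    rw [← IntermediateField.mem_toSubfield, IntermediateField.adjoin_toSubfield]
    have : Set.range (algebraMap ↥C F) = (C : Set F) := Subtype.range_coe
    rw [this]
  set K : IntermediateField ↥C F := IntermediateField.adjoin ↥C {x₁} with hK
  have hx1K : x₁ ∈ K := IntermediateField.mem_adjoin_simple_self _ _
  have htr1 : Transcendental ↥C x₁ := hind.transcendental 0
  have htr2 : Transcendental ↥K x₂ := by
    rw [hK, IntermediateField.transcendental_adjoin_iff]
    have := hind.transcendental_adjoin (s := {0}) (i := 1) (by simp)
    rw [Set.image_singleton] at this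
    exact this
  have hx20 : x₂ ≠ 0 := fun h0 => htr2 (h0 ▸ isAlgebraic_zero)
  have hδ1 : δ x₁ = 1 := by rw [hδ, hx1, inv_mul_cancel₀ hx20]
  have hδ2 : δ x₂ = h := by rw [hδ, hx2, inv_mul_cancel_left₀ hx20]
  have hδC : ∀ c ∈ C, δ c = 0 := fun c hc => by rw [hδ, hCconst c hc, mul_zero]
  have hδK : ∀ a ∈ K, δ a ∈ K := by
    intro a ha
    rw [hK, hcl] at ha
    have hle : ∀ y, y ∈ Subfield.closure ((C : Set F) ∪ {x₁}) → y ∈ K := fun y hy =>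
      (hcl _ y).mpr hy
    induction ha using Subfield.closure_induction with
    | mem x hx =>
      rcases hx with hx | hx
      · rw [hδC x hx]; exact K.zero_mem
      · rw [Set.mem_singleton_iff.mp hx, hδ1]; exact K.one_mem
    | one => simp
    | add x y hx hy h1 h2 => rw [map_add]; exact K.add_mem h1 h2
    | neg x hx h1 => rw [map_neg]; exact K.neg_mem h1
    | inv x hx h1 =>
      rw [Derivation.leibniz_inv, smul_eq_mul]
      exact K.mul_mem (K.neg_mem (pow_mem (K.inv_mem (hle _ hx)) 2)) h1
    | mul x y hx hy h1 h2 =>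
      rw [Derivation.leibniz, smul_eq_mul, smul_eq_mul]
      exact K.add_mem (K.mul_mem (hle _ hx) h2) (K.mul_mem (hle _ hy) h1)
  constructor
  · rintro ⟨z, hz, hzC⟩
    by_contra hno
    apply hzC
    have hδz : δ z = 0 := by rw [hδ, hz, mul_zero]
    have hzK : z ∈ K := by
      have hm : z ∈ IntermediateField.adjoin ↥K {x₂} := by
        have htop : ∀ y, y ∈ Subfield.closure ((C : Set F) ∪ {x₁, x₂}) →
            y ∈ (IntermediateField.adjoin ↥K {x₂}).toSubfield := by
          intro y hy
          refine Subfield.closure_le.mpr ?_ hy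
          rintro w (hw | hw | hw)
          · exact (IntermediateField.adjoin ↥K {x₂}).algebraMap_mem
              ⟨w, K.algebraMap_mem ⟨w, hw⟩⟩
          · rw [hw]
            exact (IntermediateField.adjoin ↥K {x₂}).algebraMap_mem ⟨x₁, hx1K⟩
          · rw [Set.mem_singleton_iff.mp hw]
            exact IntermediateField.mem_adjoin_simple_self _ _
        exact htop z (by rw [hgen]; trivial)
      have hhK : h ∈ K := (hcl _ h).mpr hh
      obtain ⟨w, hw⟩ := const_or_integral (k := ↥K) (fun a => ⟨δ a, hδK a a.2⟩)
        (fun a b => Subtype.ext (map_add δ (a : F) b))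
        (fun a b => Subtype.ext (Derivation.leibniz δ (a : F) b)) δ (fun a => rfl) x₂ ⟨h, hhK⟩
        hδ2 htr2 (fun g hg => hno ⟨g, (hcl _ _).mp g.2, by
          have h1 : δ (g : F) = h := congrArg Subtype.val hg
          rw [← h1, hδ, mul_inv_cancel_left₀ hx20]⟩) z hm hδz
      rw [← hw]; exact w.2
    obtain ⟨w, hw⟩ := const_or_integral (k := ↥C) (fun _ => 0)
        (fun a b => by simp) (fun a b => by simp) δ
        (fun a => by rw [map_zero]; exact hδC a a.2) x₁ 1
        (by rw [hδ1, map_one]) htr1 (fun g hg => zero_ne_one hg) z hzK hδz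
    rw [← hw]; exact w.2
  · rintro ⟨g, hg, hDg⟩
    refine ⟨x₂ - g, by rw [map_sub, hDg, hx2, sub_self], fun hc => ?_⟩
    have hgK : g ∈ K := (hcl _ g).mpr hg
    have h1 : x₂ ∈ K := by
      have := K.add_mem (K.algebraMap_mem ⟨x₂ - g, hc⟩) hgK
      have e : algebraMap ↥C F ⟨x₂ - g, hc⟩ + g = x₂ := sub_add_cancel x₂ g
      rwa [e] at this
    exact htr2 (isAlgebraic_algebraMap (⟨x₂, h1⟩ : ↥K))
end
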